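/- Fix an integer d ≥ 1 and δ ∈ (0,1). Let a^{jk} : ℝ → ℝ (1 ≤ j,k ≤ d) be measurable functions of x¹ only, with a^{jk} = a^{kj} and δ|θ|² ≤ Σ_{j,k=1}^d a^{jk}(x¹) θ^j θ^k ≤ δ⁻¹|θ|² for all x¹ ∈ ℝ and θ ∈ ℝ^d. Set L₀u = u_t + Σ_{j,k} a^{jk}(x¹) u_{x^j x^k}. Let 0 < r < R. Then there exists N = N(d,δ) such that for every u smooth on an open neighborhood of the closure of Q_R: (∫_{Q_r} (|u|² + |u_t|² + |u_x|² + |u_{xx}|²) dx dt)^{1/2} ≤ N [ (∫_{Q_R} |L₀u − u|² dx dt)^{1/2} + (R−r)^{-2} (∫_{Q_R} |u|² dx dt)^{1/2} ]. -/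

import Mathlib

open MeasureTheory

/-- Partial derivative in `t`. -/
noncomputable def pdt {d : ℕ} (u : ℝ × (Fin d → ℝ) → ℝ) : ℝ × (Fin d → ℝ) → ℝ :=
  fun p => fderiv ℝ u p (1, 0)

/-- Partial derivative in `x^j`. -/
noncomputable def pdx {d : ℕ} (j : Fin d) (u : ℝ × (Fin d → ℝ) → ℝ) :
    ℝ × (Fin d → ℝ) → ℝ :=
  fun p => fderiv ℝ u p (0, Pi.single j 1)

/-- Second partial derivative in `x^j, x^k`. -/
noncomputable def pdxx {d : ℕ} (j k : Fin d) (u : ℝ × (Fin d → ℝ) → ℝ) :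
    ℝ × (Fin d → ℝ) → ℝ :=
  pdx j (pdx k u)

/-- Open Euclidean ball `B_r ⊂ ℝ^d` centered at the origin. -/
def ballE (d : ℕ) (r : ℝ) : Set (Fin d → ℝ) := {x | ∑ j, (x j) ^ 2 < r ^ 2}

/-- Parabolic cylinder `Q_r = (0,r²) × B_r`. -/
def Qc (d : ℕ) (r : ℝ) : Set (ℝ × (Fin d → ℝ)) := Set.Ioo 0 (r ^ 2) ×ˢ ballE d r

open scoped ContDiff Topology

/-!
Cut off to `v = η² u`, which vanishes off `Q_R` for positive times but need not vanish at `t = 0`.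
For the backward operator `L₀` on the half space `t > 0` every boundary term at `t = 0` has the
favourable sign, so it suffices to bound `v` there by `f = L₀ v - v` and to absorb the commutator
terms, which are of first order, by interpolation.

Divide the equation by `a^{11}(x¹)`. The weights `a^{jk} / a^{11}` depend on `x¹` only, hence may be
integrated by parts in all other directions, while the weight of `v_{11}` is now `1`. Testing with
`v_{ll}`, `l ≠ 1`, therefore bounds every second derivative except `v_{11}` in terms of `f`. What
remains is `b (v_t - v) + v_{11}` with `b = 1 / a^{11}`, which is tested with `v_t` and with `-v`;
the equation itself then gives `v_{11}`.
-/

/-! ### Directional derivatives -/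

section DirDeriv

variable {E : Type*} [NormedAddCommGroup E] [NormedSpace ℝ E] {f g : E → ℝ}

/-- The derivative of `f` in the direction `w`. The operators `pdt` and `pdx j` are, by definition,
the cases `w = (1, 0)` and `w = (0, Pi.single j 1)`. -/
noncomputable def dirDeriv (w : E) (f : E → ℝ) : E → ℝ := fun p => fderiv ℝ f p w

lemma contDiff_dirDeriv (hf : ContDiff ℝ ∞ f) (w : E) : ContDiff ℝ ∞ (dirDeriv w f) :=
  (hf.fderiv_right (m := ∞) (by simp)).clm_apply contDiff_const

lemma dirDeriv_add {p : E} (hf : DifferentiableAt ℝ f p) (hg : DifferentiableAt ℝ g p) (w : E) :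
    dirDeriv w (fun q => f q + g q) p = dirDeriv w f p + dirDeriv w g p := by
  simp only [dirDeriv, fderiv_fun_add hf hg, add_apply]

lemma dirDeriv_mul {p : E} (hf : DifferentiableAt ℝ f p) (hg : DifferentiableAt ℝ g p) (w : E) :
    dirDeriv w (fun q => f q * g q) p = dirDeriv w f p * g p + f p * dirDeriv w g p := by
  simp only [dirDeriv, fderiv_fun_mul hf hg, add_apply, smul_apply, smul_eq_mul]
  ring

lemma dirDeriv_comp {s : ℝ → ℝ} {p : E} (hs : DifferentiableAt ℝ s (f p))
    (hf : DifferentiableAt ℝ f p) (w : E) :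
    dirDeriv w (fun q => s (f q)) p = deriv s (f p) * dirDeriv w f p :=
  congr($((hs.hasDerivAt.comp_hasFDerivAt p hf.hasFDerivAt).fderiv) w)

lemma dirDeriv_comm (hf : ContDiff ℝ ∞ f) (v w : E) :
    dirDeriv v (dirDeriv w f) = dirDeriv w (dirDeriv v f) := by
  funext p
  have hdiff : DifferentiableAt ℝ (fderiv ℝ f) p :=
    (hf.fderiv_right (m := ∞) (by simp)).differentiable (by simp) p
  have eq_fderiv_fderiv (v w : E) :
      dirDeriv v (dirDeriv w f) p = fderiv ℝ (fderiv ℝ f) p v w := by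
    change fderiv ℝ (fun q => fderiv ℝ f q w) p v = _
    simp [fderiv_clm_apply hdiff (differentiableAt_const w)]
  rw [eq_fderiv_fderiv, eq_fderiv_fderiv]
  exact hf.contDiffAt.isSymmSndFDerivAt (by simp; norm_cast) v w

lemma dirDeriv_eventuallyEq {p : E} (h : f =ᶠ[𝓝 p] g) (w : E) :
    dirDeriv w f =ᶠ[𝓝 p] dirDeriv w g :=
  h.fderiv.fun_comp fun L : E →L[ℝ] ℝ => L w

lemma dirDeriv_dirDeriv_mul (hf : ContDiff ℝ ∞ f) (hg : ContDiff ℝ ∞ g) (v w p : E) :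
    dirDeriv v (dirDeriv w fun q => f q * g q) p
      = dirDeriv v (dirDeriv w f) p * g p + dirDeriv w f p * dirDeriv v g p
        + (dirDeriv v f p * dirDeriv w g p + f p * dirDeriv v (dirDeriv w g) p) := by
  have hf₀ := hf.differentiable (by simp)
  have hg₀ := hg.differentiable (by simp)
  have hf₁ := (contDiff_dirDeriv hf w).differentiable (by simp)
  have hg₁ := (contDiff_dirDeriv hg w).differentiable (by simp)
  have first_order : dirDeriv w (fun q => f q * g q)
      = fun q => dirDeriv w f q * g q + f q * dirDeriv w g q :=
    funext fun q => dirDeriv_mul (hf₀ q) (hg₀ q) w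
  rw [first_order, dirDeriv_add ((hf₁.fun_mul hg₀) p) ((hf₀.fun_mul hg₁) p),
    dirDeriv_mul (hf₁ p) (hg₀ p), dirDeriv_mul (hf₀ p) (hg₁ p)]

section SqMul

variable {η u : E → ℝ} (hη : ContDiff ℝ ∞ η) (hu : ContDiff ℝ ∞ u)
include hη hu

lemma dirDeriv_sq_mul (w p : E) :
    dirDeriv w (fun q => η q ^ 2 * u q) p
      = 2 * η p * dirDeriv w η p * u p + η p ^ 2 * dirDeriv w u p := by
  have hη' := hη.differentiable (by simp)
  simp_rw [sq]
  rw [dirDeriv_mul ((hη'.fun_mul hη') p) (hu.differentiable (by simp) p),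
    dirDeriv_mul (hη' p) (hη' p)]
  ring

lemma dirDeriv_dirDeriv_sq_mul (v w p : E) :
    dirDeriv v (dirDeriv w fun q => η q ^ 2 * u q) p
      = η p ^ 2 * dirDeriv v (dirDeriv w u) p
        + 2 * (dirDeriv v η p * dirDeriv w η p + η p * dirDeriv v (dirDeriv w η) p) * u p
        + 2 * (dirDeriv v η p * (η p * dirDeriv w u p)
          + dirDeriv w η p * (η p * dirDeriv v u p)) := by
  have hη' := hη.differentiable (by simp) p
  simp_rw [sq]
  rw [dirDeriv_dirDeriv_mul (hη.mul hη) hu, dirDeriv_dirDeriv_mul hη hη, dirDeriv_mul hη' hη',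
    dirDeriv_mul hη' hη']
  ring

end SqMul

lemma dirDeriv_eq_zero_of_nonneg {η : E → ℝ} (hη : 0 ≤ η) {p : E} (hp : η p = 0) (w : E) :
    dirDeriv w η p = 0 := by
  have hmin : IsLocalMin η p := .of_forall fun q => by simpa [hp] using hη q
  simp [dirDeriv, hmin.fderiv_eq_zero]

end DirDeriv

/-! ### Test functions -/

section TestFunction

variable {E : Type*} [NormedAddCommGroup E] [NormedSpace ℝ E] {f η : E → ℝ}

/-- Smooth compactly supported functions. -/
structure IsTestFunction (f : E → ℝ) : Prop where
  contDiff : ContDiff ℝ ∞ f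
  hasCompactSupport : HasCompactSupport f

namespace IsTestFunction

lemma dirDeriv (hf : IsTestFunction f) (w : E) : IsTestFunction (dirDeriv w f) :=
  ⟨contDiff_dirDeriv hf.contDiff w, hf.hasCompactSupport.fderiv_apply (𝕜 := ℝ) w⟩

lemma smooth_mul (hη : ContDiff ℝ ∞ η) (hf : IsTestFunction f) :
    IsTestFunction fun p => η p * f p :=
  ⟨hη.mul hf.contDiff, hf.hasCompactSupport.mul_left⟩

section Integrability

variable [MeasurableSpace E] [BorelSpace E] {μ : Measure E} [IsFiniteMeasureOnCompacts μ]

lemma memLp (hf : IsTestFunction f) (q : ENNReal) : MemLp f q μ :=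
  hf.contDiff.continuous.memLp_of_hasCompactSupport hf.hasCompactSupport

lemma integrable_mul {c : E → ℝ} (hf : IsTestFunction f) (hc : MemLp c ⊤ μ) :
    Integrable (fun p => c p * f p) μ :=
  memLp_one_iff_integrable.1 ((hf.memLp 1).mul hc)

end Integrability

lemma pdt {d : ℕ} {v : ℝ × (Fin d → ℝ) → ℝ} (hv : IsTestFunction v) : IsTestFunction (pdt v) :=
  hv.dirDeriv _

lemma pdx {d : ℕ} {v : ℝ × (Fin d → ℝ) → ℝ} (hv : IsTestFunction v) (j : Fin d) :
    IsTestFunction (pdx j v) :=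
  hv.dirDeriv _

lemma pdxx {d : ℕ} {v : ℝ × (Fin d → ℝ) → ℝ} (hv : IsTestFunction v) (j k : Fin d) :
    IsTestFunction (pdxx j k v) :=
  (hv.pdx k).pdx j

end IsTestFunction

lemma pdxx_comm {d : ℕ} {v : ℝ × (Fin d → ℝ) → ℝ} (hv : ContDiff ℝ ∞ v) (j k : Fin d) :
    pdxx j k v = pdxx k j v :=
  dirDeriv_comm hv _ _

lemma exists_isTestFunction_eventuallyEq [FiniteDimensional ℝ E] {u : E → ℝ} {U S : Set E}
    (hU : IsOpen U) (hS : IsCompact S) (hSU : S ⊆ U) (hu : ContDiffOn ℝ ∞ u U) :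
    ∃ v, IsTestFunction v ∧ ∀ p ∈ S, u =ᶠ[𝓝 p] v := by
  obtain ⟨K, hK, hSK, hKU⟩ := exists_compact_between hS hU hSU
  obtain ⟨χ, hχ_one, hχ_zero, -⟩ := exists_contMDiffMap_one_nhds_of_subset_interior (n := (⊤ : ℕ∞))
    (modelWithCornersSelf ℝ E) hS.isClosed hSK
  refine ⟨fun p => χ p * u p, ⟨contDiff_iff_contDiffAt.2 fun p => ?_, ?_⟩, fun p hp => ?_⟩
  · by_cases hp : p ∈ K
    · exact χ.contMDiff.contDiff.contDiffAt.mul (hu.contDiffAt (hU.mem_nhds (hKU hp)))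
    · have hzero : (fun p => χ p * u p) =ᶠ[𝓝 p] fun _ => (0 : ℝ) := by
        filter_upwards [hK.isClosed.isOpen_compl.mem_nhds hp] with q hq
        rw [hχ_zero q hq, zero_mul]
      exact contDiffAt_const.congr_of_eventuallyEq hzero
  · exact HasCompactSupport.intro hK fun p hp => by rw [hχ_zero p hp, zero_mul]
  · filter_upwards [hχ_one.filter_mono (nhds_le_nhdsSet hp)] with q hq
    rw [hq, one_mul]

end TestFunction

/-! ### Inequalities in `L²` -/

section L2

variable {Ω : Type*} [MeasurableSpace Ω] {μ : Measure Ω} {f b : Ω → ℝ}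

lemma sq_mul_le_integral_sq {h y : Ω → ℝ} {m S : ℝ} (hh : MemLp h 2 μ) (hy : MemLp y 2 μ)
    (hm : 0 ≤ m) (hyS : ∫ p, y p ^ 2 ∂μ ≤ S) (hS : m * S ≤ ∫ p, h p * y p ∂μ) :
    m ^ 2 * S ≤ ∫ p, h p ^ 2 ∂μ := by
  have expand : ∫ p, (h p - m * y p) ^ 2 ∂μ
      = ∫ p, h p ^ 2 ∂μ - 2 * m * ∫ p, h p * y p ∂μ + m ^ 2 * ∫ p, y p ^ 2 ∂μ := by
    rw [← integral_const_mul, ← integral_const_mul, ← integral_sub, ← integral_add]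
    · congr 1 with p; ring
    · exact hh.integrable_sq.sub ((hh.integrable_mul hy).const_mul _)
    · exact hy.integrable_sq.const_mul _
    · exact hh.integrable_sq
    · exact (hh.integrable_mul hy).const_mul _
  have hnonneg : 0 ≤ ∫ p, (h p - m * y p) ^ 2 ∂μ := integral_nonneg fun p => sq_nonneg _
  nlinarith [mul_le_mul_of_nonneg_left hS hm, mul_le_mul_of_nonneg_left hyS (sq_nonneg m)]

lemma integral_mul_sq_le {M : ℝ} (hf : MemLp f 2 μ) (hb : ∀ p, |b p| ≤ M) :
    ∫ p, (b p * f p) ^ 2 ∂μ ≤ M ^ 2 * ∫ p, f p ^ 2 ∂μ := by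
  rw [← integral_const_mul]
  refine integral_mono_of_nonneg (.of_forall fun p => sq_nonneg _)
    (hf.integrable_sq.const_mul _) (.of_forall fun p => ?_)
  simp only [mul_pow]
  exact mul_le_mul_of_nonneg_right (sq_le_sq' (abs_le.1 (hb p)).1 (abs_le.1 (hb p)).2) (sq_nonneg _)

lemma mul_integral_sq_le_integral_mul {m : ℝ} (hf : MemLp f 2 μ) (hb : MemLp b ⊤ μ)
    (hmb : ∀ p, m ≤ b p) : m * ∫ p, f p ^ 2 ∂μ ≤ ∫ p, b p * (f p * f p) ∂μ := by
  rw [← integral_const_mul]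
  have hint : Integrable (b * (f * f)) μ :=
    mul_assoc b f f ▸ (hf.mul hb (r := 2)).integrable_mul hf
  refine integral_mono (hf.integrable_sq.const_mul m) hint fun p => ?_
  simpa only [sq] using mul_le_mul_of_nonneg_right (hmb p) (mul_self_nonneg (f p))

lemma integral_sub_sq_le {g : Ω → ℝ} (hf : MemLp f 2 μ) (hg : MemLp g 2 μ) :
    ∫ p, (f p - g p) ^ 2 ∂μ ≤ 2 * ∫ p, f p ^ 2 ∂μ + 2 * ∫ p, g p ^ 2 ∂μ := by
  have hf₂ := hf.integrable_sq.const_mul 2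
  have hg₂ := hg.integrable_sq.const_mul 2
  rw [← integral_const_mul, ← integral_const_mul, ← integral_add hf₂ hg₂]
  refine integral_mono_of_nonneg (.of_forall fun p => sq_nonneg _) (hf₂.add hg₂)
    (.of_forall fun p => ?_)
  dsimp only
  nlinarith [sq_nonneg (f p + g p)]

lemma integral_sum_sq_le {ι : Type*} (s : Finset ι) {h : ι → Ω → ℝ} (hh : ∀ i, MemLp (h i) 2 μ) :
    ∫ p, (∑ i ∈ s, h i p) ^ 2 ∂μ ≤ s.card * ∑ i ∈ s, ∫ p, h i p ^ 2 ∂μ := by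
  rw [← integral_finsetSum s fun i _ => (hh i).integrable_sq, ← integral_const_mul]
  exact integral_mono_of_nonneg (.of_forall fun p => sq_nonneg _)
    ((integrable_finsetSum s fun i _ => (hh i).integrable_sq).const_mul _)
    (.of_forall fun p => sq_sum_le_card_mul_sum_sq)

end L2

/-! ### Integration by parts -/

section IntegrationByParts

variable {E : Type*} [NormedAddCommGroup E] [NormedSpace ℝ E] [FiniteDimensional ℝ E]
  [MeasurableSpace E] [BorelSpace E] {μ : Measure E} [μ.IsAddHaarMeasure] {c f g : E → ℝ} {w : E}

lemma integral_mul_dirDeriv_eq_zero (hc : MemLp c ⊤ μ) (hcw : ∀ s : ℝ, Function.Periodic c (s • w))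
    (hf : IsTestFunction f) : ∫ p, c p * dirDeriv w f p ∂μ = 0 := by
  have hc_deriv (x : E) : HasLineDerivAt ℝ c 0 x w := by
    simp only [HasLineDerivAt, hcw _ x]
    exact hasDerivAt_const _ _
  have hcf {g : E → ℝ} (hg : IsTestFunction g) : Integrable (fun p => g p * c p) μ := by
    simpa only [mul_comm] using hg.integrable_mul hc
  have key := integral_bilinear_hasLineDerivAt_right_eq_neg_left_of_integrable
    (B := ContinuousLinearMap.mul ℝ ℝ) (hcf (hf.dirDeriv w)) (by simp) (hcf hf)
    (fun x _ => (hf.contDiff.differentiable (by simp) x).hasFDerivAt.hasLineDerivAt w)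
    (fun x _ => hc_deriv x)
  simpa [mul_comm, dirDeriv] using key.symm

lemma integral_mul_dirDeriv_mul (hc : MemLp c ⊤ μ) (hcw : ∀ s : ℝ, Function.Periodic c (s • w))
    (hf : IsTestFunction f) (hg : ContDiff ℝ ∞ g) :
    ∫ p, c p * (dirDeriv w f p * g p) ∂μ = -∫ p, c p * (f p * dirDeriv w g p) ∂μ := by
  have hmul {φ ψ : E → ℝ} (hφ : IsTestFunction φ) (hψ : ContDiff ℝ ∞ ψ) :
      IsTestFunction fun p => φ p * ψ p := by
    simpa only [mul_comm] using hφ.smooth_mul hψ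
  have key := integral_mul_dirDeriv_eq_zero hc hcw (hmul hf hg)
  simp_rw [dirDeriv_mul (hf.contDiff.differentiable (by simp) _) (hg.differentiable (by simp) _),
    mul_add] at key
  rw [integral_add ((hmul (hf.dirDeriv w) hg).integrable_mul hc)
    ((hmul hf (contDiff_dirDeriv hg w)).integrable_mul hc)] at key
  linarith

end IntegrationByParts

section TimeIntegration

variable {F : Type*} [NormedAddCommGroup F] [NormedSpace ℝ F]

lemma integral_Ioi_dirDeriv {f : ℝ × F → ℝ} (hf : IsTestFunction f) (y : F) :
    ∫ t in Set.Ioi 0, dirDeriv ((1, 0) : ℝ × F) f (t, y) = -f (0, y) := by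
  have hslice : ContDiff ℝ 1 fun t : ℝ => f (t, y) :=
    (hf.contDiff.of_le (by simp)).comp (contDiff_id.prodMk contDiff_const)
  have hsupp : HasCompactSupport fun t : ℝ => f (t, y) :=
    hf.hasCompactSupport.comp_isClosedEmbedding <|
      .of_continuous_injective_isClosedMap (by fun_prop) (fun s t h => congrArg Prod.fst h)
        (isClosedMap_prodMk_right y)
  have hderiv (t : ℝ) : deriv (fun t : ℝ => f (t, y)) t = dirDeriv ((1, 0) : ℝ × F) f (t, y) :=
    ((hf.contDiff.differentiable (by simp) (t, y)).hasFDerivAt.comp_hasDerivAt t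
      ((hasDerivAt_id t).prodMk (hasDerivAt_const t y))).deriv
  simpa only [hderiv] using hsupp.integral_Ioi_deriv_eq hslice 0

lemma integral_prod_mul_dirDeriv [FiniteDimensional ℝ F] [MeasurableSpace F] [BorelSpace F]
    {ν : Measure F} [IsFiniteMeasureOnCompacts ν] [SFinite ν] {c : F → ℝ} {f : ℝ × F → ℝ}
    (hc : MemLp (fun p : ℝ × F => c p.2) ⊤ ((volume.restrict (Set.Ioi 0)).prod ν))
    (hf : IsTestFunction f) :
    ∫ p, c p.2 * dirDeriv (1, 0) f p ∂((volume.restrict (Set.Ioi 0)).prod ν)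
      = -∫ y, c y * f (0, y) ∂ν := by
  rw [integral_prod_symm _ ((hf.dirDeriv _).integrable_mul hc), ← integral_neg]
  congr 1 with y
  dsimp only
  rw [integral_const_mul, integral_Ioi_dirDeriv hf, mul_neg]

end TimeIntegration

/-! ### Integration by parts on the half space `t > 0` -/

section HalfSpace

variable {d : ℕ}

/-- The half space `{t > 0}` of `ℝ × ℝ^d`. -/
def halfSpace (d : ℕ) : Set (ℝ × (Fin d → ℝ)) := Set.Ioi 0 ×ˢ Set.univ

lemma measurableSet_halfSpace : MeasurableSet (halfSpace d) :=
  measurableSet_Ioi.prod .univ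

lemma volume_restrict_halfSpace :
    (volume : Measure (ℝ × (Fin d → ℝ))).restrict (halfSpace d)
      = (volume.restrict (Set.Ioi 0)).prod volume := by
  rw [halfSpace, Measure.volume_eq_prod, ← Measure.prod_restrict, Measure.restrict_univ]

variable {c : (Fin d → ℝ) → ℝ} {v : ℝ × (Fin d → ℝ) → ℝ}
  (hc : MemLp (fun p : ℝ × (Fin d → ℝ) => c p.2) ⊤)

include hc in
lemma setIntegral_halfSpace_mul_pdx_mul {f g : ℝ × (Fin d → ℝ) → ℝ} {j : Fin d}
    (hcj : ∀ s : ℝ, Function.Periodic c (Pi.single j s)) (hf : IsTestFunction f)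
    (hg : ContDiff ℝ ∞ g) :
    ∫ p in halfSpace d, c p.2 * (pdx j f p * g p)
      = -∫ p in halfSpace d, c p.2 * (f p * pdx j g p) := by
  have : (volume : Measure (ℝ × (Fin d → ℝ))).IsAddHaarMeasure := by
    rw [Measure.volume_eq_prod]; infer_instance
  let c' : ℝ × (Fin d → ℝ) → ℝ := (halfSpace d).indicator fun p => c p.2
  have hperiodic (s : ℝ) : Function.Periodic c' (s • (0, Pi.single j 1)) := fun p => by
    have hcp := hcj s p.2
    simp [c', Set.indicator, halfSpace, ← Pi.single_smul, hcp]
  have hset (h : ℝ × (Fin d → ℝ) → ℝ) :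
      ∫ p in halfSpace d, c p.2 * h p = ∫ p, c' p * h p := by
    rw [← integral_indicator measurableSet_halfSpace]
    congr 1 with p
    exact Set.indicator_mul_left _ _ _
  rw [hset, hset]
  exact integral_mul_dirDeriv_mul (hc.indicator measurableSet_halfSpace) hperiodic hf hg

include hc in
lemma setIntegral_halfSpace_mul_self_mul_pdt_nonpos (hc₀ : 0 ≤ c) (hv : IsTestFunction v) :
    ∫ p in halfSpace d, c p.2 * (v p * pdt v p) ≤ 0 := by
  have hsq (p : ℝ × (Fin d → ℝ)) :
      c p.2 * (v p * pdt v p) = c p.2 * dirDeriv (1, 0) (fun q => v q * v q) p / 2 := by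
    have hdiff := hv.contDiff.differentiable (by simp) p
    rw [dirDeriv_mul hdiff hdiff]
    change _ = c p.2 * (pdt v p * v p + v p * pdt v p) / 2
    ring
  have hc' := hc.restrict (halfSpace d)
  simp_rw [hsq, integral_div]
  rw [volume_restrict_halfSpace] at hc' ⊢
  rw [integral_prod_mul_dirDeriv hc' (hv.smooth_mul hv.contDiff)]
  have : 0 ≤ ∫ y, c y * (v (0, y) * v (0, y)) :=
    integral_nonneg fun y => mul_nonneg (hc₀ y) (mul_self_nonneg _)
  linarith

section Sign

variable {l : Fin d} (hcl : ∀ s : ℝ, Function.Periodic c (Pi.single l s)) (hc₀ : 0 ≤ c)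
  (hv : IsTestFunction v)
include hc hcl hc₀ hv

lemma setIntegral_halfSpace_mul_pdxx_mul_pdt_nonneg :
    0 ≤ ∫ p in halfSpace d, c p.2 * (pdxx l l v p * pdt v p) := by
  have hcomm : pdx l (pdt v) = pdt (pdx l v) := dirDeriv_comm hv.contDiff _ _
  have key := setIntegral_halfSpace_mul_pdx_mul hc hcl (hv.pdx l) hv.pdt.contDiff
  rw [hcomm] at key
  have := setIntegral_halfSpace_mul_self_mul_pdt_nonpos hc hc₀ (hv.pdx l)
  exact key ▸ neg_nonneg.2 this

lemma setIntegral_halfSpace_mul_pdxx_mul_self_nonpos :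
    ∫ p in halfSpace d, c p.2 * (pdxx l l v p * v p) ≤ 0 := by
  have key := setIntegral_halfSpace_mul_pdx_mul hc hcl (hv.pdx l) hv.contDiff
  have : 0 ≤ ∫ p in halfSpace d, c p.2 * (pdx l v p * pdx l v p) :=
    integral_nonneg fun p => mul_nonneg (hc₀ p.2) (mul_self_nonneg _)
  exact key ▸ neg_nonpos.2 this

end Sign

include hc in
lemma setIntegral_halfSpace_mul_pdxx_mul_pdxx {k l : Fin d}
    (hck : ∀ s : ℝ, Function.Periodic c (Pi.single k s))
    (hcl : ∀ s : ℝ, Function.Periodic c (Pi.single l s)) (hv : IsTestFunction v) (j : Fin d) :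
    ∫ p in halfSpace d, c p.2 * (pdxx l l v p * pdxx j k v p)
      = ∫ p in halfSpace d, c p.2 * (pdxx k l v p * pdxx j l v p) := by
  have hcomm : pdx l (pdxx j k v) = pdx k (pdxx j l v) := by
    rw [pdxx_comm hv.contDiff j k, pdxx_comm hv.contDiff j l]
    exact pdxx_comm (hv.pdx j).contDiff l k
  have hl := setIntegral_halfSpace_mul_pdx_mul hc hcl (hv.pdx l) (hv.pdxx j k).contDiff
  have hk := setIntegral_halfSpace_mul_pdx_mul hc hck (hv.pdx l) (hv.pdxx j l).contDiff
  exact hl.trans (hcomm ▸ hk.symm)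

lemma integral_pdx_sq_le (hv : IsTestFunction v) (j : Fin d) :
    ∫ p in halfSpace d, pdx j v p ^ 2
      ≤ ((∫ p in halfSpace d, v p ^ 2) + ∫ p in halfSpace d, pdxx j j v p ^ 2) / 2 := by
  have hibp := setIntegral_halfSpace_mul_pdx_mul (c := fun _ => 1) (j := j)
    (memLp_top_const 1) (fun _ _ => rfl) hv (hv.pdx j).contDiff
  have hv₂ : MemLp v 2 (volume.restrict (halfSpace d)) := hv.memLp 2
  have hvjj : MemLp (pdxx j j v) 2 (volume.restrict (halfSpace d)) := (hv.pdxx j j).memLp 2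
  simp_rw [one_mul, ← sq] at hibp
  rw [hibp, ← integral_neg, ← integral_add hv₂.integrable_sq hvjj.integrable_sq, ← integral_div]
  refine integral_mono (hv₂.integrable_mul hvjj).neg
    ((hv₂.integrable_sq.add hvjj.integrable_sq).div_const 2) fun p => ?_
  change -(v p * pdxx j j v p) ≤ (v p ^ 2 + pdxx j j v p ^ 2) / 2
  nlinarith [sq_nonneg (v p + pdxx j j v p)]

end HalfSpace

/-! ### Coefficients depending on one coordinate -/

section Coefficients

variable {d : ℕ} {z : Fin d}

lemma memLp_top_comp_coord {φ : ℝ → ℝ} {M : ℝ} (hφ : Measurable φ) (hM : ∀ s, |φ s| ≤ M) (z : Fin d)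
    (μ : Measure (ℝ × (Fin d → ℝ))) : MemLp (fun p : ℝ × (Fin d → ℝ) => φ (p.2 z)) ⊤ μ :=
  memLp_top_of_bound (hφ.comp (by fun_prop)).aestronglyMeasurable M (.of_forall fun p => hM (p.2 z))

lemma periodic_comp_coord (φ : ℝ → ℝ) {l : Fin d} (hl : l ≠ z) (s : ℝ) :
    Function.Periodic (fun x : Fin d → ℝ => φ (x z)) (Pi.single l s) := fun x => by
  simp [hl.symm]

/-- Measurable symmetric coefficient matrices `a s` whose eigenvalues lie in `[δ, δ⁻¹]`. -/
structure IsUniformlyElliptic (δ : ℝ) (a : ℝ → Fin d → Fin d → ℝ) : Prop where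
  pos : 0 < δ
  measurable : ∀ j k, Measurable fun s => a s j k
  symm : ∀ s j k, a s j k = a s k j
  lower : ∀ (s : ℝ) (θ : Fin d → ℝ), δ * ∑ j, θ j ^ 2 ≤ ∑ j, ∑ k, a s j k * θ j * θ k
  upper : ∀ (s : ℝ) (θ : Fin d → ℝ), ∑ j, ∑ k, a s j k * θ j * θ k ≤ δ⁻¹ * ∑ j, θ j ^ 2

namespace IsUniformlyElliptic

variable {δ : ℝ} {a : ℝ → Fin d → Fin d → ℝ} (ha : IsUniformlyElliptic δ a)
include ha

lemma le_diag (s : ℝ) (j : Fin d) : δ ≤ a s j j := by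
  simpa [Pi.single_apply] using ha.lower s (Pi.single j 1)

lemma diag_le (s : ℝ) (j : Fin d) : a s j j ≤ δ⁻¹ := by
  simpa [Pi.single_apply] using ha.upper s (Pi.single j 1)

lemma diag_pos (s : ℝ) (j : Fin d) : 0 < a s j j := ha.pos.trans_le (ha.le_diag s j)

lemma quadratic_nonneg (s : ℝ) (j k : Fin d) (c : ℝ) :
    0 ≤ a s j j + 2 * c * a s j k + c ^ 2 * a s k k := by
  let θ : Fin d → ℝ := fun i => (if i = j then 1 else 0) + c * (if i = k then 1 else 0)
  have hquad : 0 ≤ ∑ i, ∑ i', a s i i' * θ i * θ i' :=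
    (mul_nonneg ha.pos.le (Finset.sum_nonneg fun i _ => sq_nonneg (θ i))).trans (ha.lower s θ)
  simp only [θ, mul_add, add_mul, Finset.sum_add_distrib, mul_ite, ite_mul, mul_zero, zero_mul,
    mul_one, Finset.sum_ite_eq', Finset.mem_univ, if_true, ha.symm s k j] at hquad
  linarith

lemma abs_coeff_le (s : ℝ) (j k : Fin d) : |a s j k| ≤ δ⁻¹ := by
  have hadd := ha.quadratic_nonneg s j k 1
  have hsub := ha.quadratic_nonneg s j k (-1)
  have hj := ha.diag_le s j
  have hk := ha.diag_le s k
  exact abs_le.2 ⟨by linarith, by linarith⟩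

lemma le_inv_diag (s : ℝ) (j : Fin d) : δ ≤ (a s j j)⁻¹ :=
  le_inv_of_le_inv₀ (ha.diag_pos s j) (ha.diag_le s j)

lemma inv_diag_nonneg (s : ℝ) (j : Fin d) : 0 ≤ (a s j j)⁻¹ := (inv_pos.2 (ha.diag_pos s j)).le

lemma abs_inv_diag_le (s : ℝ) (j : Fin d) : |(a s j j)⁻¹| ≤ δ⁻¹ := by
  rw [abs_of_nonneg (ha.inv_diag_nonneg s j)]
  exact inv_anti₀ ha.pos (ha.le_diag s j)

lemma abs_inv_diag_mul_le (s : ℝ) (i j k : Fin d) : |(a s i i)⁻¹ * a s j k| ≤ δ⁻¹ ^ 2 := by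
  rw [abs_mul, sq]
  exact mul_le_mul (ha.abs_inv_diag_le s i) (ha.abs_coeff_le s j k) (abs_nonneg _)
    (inv_pos.2 ha.pos).le

lemma memLp_top_coeff (j k : Fin d) (μ : Measure (ℝ × (Fin d → ℝ))) :
    MemLp (fun p : ℝ × (Fin d → ℝ) => a (p.2 z) j k) ⊤ μ :=
  memLp_top_comp_coord (ha.measurable j k) (ha.abs_coeff_le · j k) z μ

lemma memLp_top_inv_diag (μ : Measure (ℝ × (Fin d → ℝ))) :
    MemLp (fun p : ℝ × (Fin d → ℝ) => (a (p.2 z) z z)⁻¹) ⊤ μ :=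
  memLp_top_comp_coord (ha.measurable z z).inv (ha.abs_inv_diag_le · z) z μ

lemma memLp_top_inv_diag_mul (j k : Fin d) (μ : Measure (ℝ × (Fin d → ℝ))) :
    MemLp (fun p : ℝ × (Fin d → ℝ) => (a (p.2 z) z z)⁻¹ * a (p.2 z) j k) ⊤ μ :=
  memLp_top_comp_coord ((ha.measurable z z).inv.mul (ha.measurable j k))
    (ha.abs_inv_diag_mul_le · z j k) z μ

end IsUniformlyElliptic

/-- The operator `L₀ v = v_t + Σ a^{jk}(x^z) v_{x^j x^k}`, whose coefficients depend on the
coordinate `x^z` only. -/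
noncomputable def parabolicOp (a : ℝ → Fin d → Fin d → ℝ) (z : Fin d) (v : ℝ × (Fin d → ℝ) → ℝ) :
    ℝ × (Fin d → ℝ) → ℝ :=
  fun p => pdt v p + ∑ j, ∑ k, a (p.2 z) j k * pdxx j k v p

variable {δ : ℝ} {a : ℝ → Fin d → Fin d → ℝ} {v : ℝ × (Fin d → ℝ) → ℝ}

lemma memLp_parabolicOp_sub (ha : IsUniformlyElliptic δ a) (hv : IsTestFunction v)
    (μ : Measure (ℝ × (Fin d → ℝ))) [IsFiniteMeasureOnCompacts μ] :
    MemLp (fun p => parabolicOp a z v p - v p) 2 μ :=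
  ((hv.pdt.memLp 2).add (memLp_finsetSum _ fun j _ => memLp_finsetSum _ fun k _ =>
    ((hv.pdxx j k).memLp 2).mul (ha.memLp_top_coeff j k μ))).sub (hv.memLp 2)

lemma inv_diag_mul_parabolicOp_sub (p : ℝ × (Fin d → ℝ)) :
    (a (p.2 z) z z)⁻¹ * (parabolicOp a z v p - v p)
      = (a (p.2 z) z z)⁻¹ * (pdt v p - v p)
        + ∑ j, ∑ k, (a (p.2 z) z z)⁻¹ * a (p.2 z) j k * pdxx j k v p := by
  simp only [parabolicOp, mul_assoc, ← Finset.mul_sum]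
  ring

end Coefficients

/-! ### The estimate on the half space -/

section NormalDirection

variable {d : ℕ} {b : (Fin d → ℝ) → ℝ} {δ : ℝ} {v : ℝ × (Fin d → ℝ) → ℝ}
  (hb : MemLp (fun p : ℝ × (Fin d → ℝ) => b p.2) ⊤) (hδ : 0 ≤ δ) (hδb : ∀ x, δ ≤ b x)
  (hv : IsTestFunction v)

include hb hv in
lemma integral_normalOp_mul (z : Fin d) {y : ℝ × (Fin d → ℝ) → ℝ} (hy : IsTestFunction y) :
    ∫ p in halfSpace d, (b p.2 * (pdt v p - v p) + pdxx z z v p) * y p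
      = (∫ p in halfSpace d, b p.2 * (pdt v p * y p)) - (∫ p in halfSpace d, b p.2 * (v p * y p))
        + ∫ p in halfSpace d, pdxx z z v p * y p := by
  have hint {f : ℝ × (Fin d → ℝ) → ℝ} (hf : IsTestFunction f) :
      IntegrableOn (fun p => b p.2 * (f p * y p)) (halfSpace d) :=
    (hy.smooth_mul hf.contDiff).integrable_mul (hb.restrict _)
  have hzz : IntegrableOn (fun p => pdxx z z v p * y p) (halfSpace d) :=
    memLp_one_iff_integrable.1 ((hy.smooth_mul (hv.pdxx z z).contDiff).memLp 1)
  rw [← integral_sub (hint hv.pdt) (hint hv), ← integral_add]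
  · congr 1 with p
    ring
  · exact (hint hv.pdt).sub (hint hv)
  · exact hzz

include hb hv in
lemma memLp_normalOp (z : Fin d) :
    MemLp (fun p => b p.2 * (pdt v p - v p) + pdxx z z v p) 2 (volume.restrict (halfSpace d)) :=
  (((hv.pdt.memLp 2).sub (hv.memLp 2)).mul (hb.restrict _)).add ((hv.pdxx z z).memLp 2)

include hb hδ hδb hv

lemma sq_mul_integral_pdt_sq_le (z : Fin d) :
    δ ^ 2 * ∫ p in halfSpace d, pdt v p ^ 2
      ≤ ∫ p in halfSpace d, (b p.2 * (pdt v p - v p) + pdxx z z v p) ^ 2 := by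
  refine sq_mul_le_integral_sq (memLp_normalOp hb hv z) (hv.pdt.memLp 2) hδ le_rfl ?_
  rw [integral_normalOp_mul hb hv z hv.pdt]
  have hmain := mul_integral_sq_le_integral_mul (hv.pdt.memLp 2) (hb.restrict (halfSpace d))
    fun p => hδb p.2
  have hboundary := setIntegral_halfSpace_mul_self_mul_pdt_nonpos hb (fun x => hδ.trans (hδb x)) hv
  have hzz := setIntegral_halfSpace_mul_pdxx_mul_pdt_nonneg (c := fun _ => 1) (l := z)
    (memLp_top_const 1) (fun _ _ => rfl) (fun _ => zero_le_one) hv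
  simp_rw [one_mul] at hzz
  linarith

lemma sq_mul_integral_sq_le (z : Fin d) :
    δ ^ 2 * ∫ p in halfSpace d, v p ^ 2
      ≤ ∫ p in halfSpace d, (b p.2 * (pdt v p - v p) + pdxx z z v p) ^ 2 := by
  refine sq_mul_le_integral_sq (y := fun p => -v p) (memLp_normalOp hb hv z) (hv.memLp 2).neg hδ
    (by simp only [neg_sq, le_refl]) ?_
  simp_rw [mul_neg, integral_neg]
  rw [integral_normalOp_mul hb hv z hv]
  have hmain := mul_integral_sq_le_integral_mul (hv.memLp 2) (hb.restrict (halfSpace d))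
    fun p => hδb p.2
  have hboundary := setIntegral_halfSpace_mul_self_mul_pdt_nonpos hb (fun x => hδ.trans (hδb x)) hv
  have hzz := setIntegral_halfSpace_mul_pdxx_mul_self_nonpos (c := fun _ => 1) (l := z)
    (memLp_top_const 1) (fun _ _ => rfl) (fun _ => zero_le_one) hv
  simp_rw [one_mul] at hzz
  simp_rw [mul_comm (v _) (pdt v _)] at hboundary
  linarith

end NormalDirection

section TangentialDirections

variable {d : ℕ} {z : Fin d} {δ : ℝ} {a : ℝ → Fin d → Fin d → ℝ} {v : ℝ × (Fin d → ℝ) → ℝ}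
  (ha : IsUniformlyElliptic δ a) (hv : IsTestFunction v)
include ha hv

-- Dividing by `a^{zz}` makes the weight of `v_zz` constant, so it can be moved in every direction.
lemma setIntegral_inv_diag_mul_pdxx_mul_pdxx {l : Fin d} (hl : l ≠ z) (j k : Fin d) :
    ∫ p in halfSpace d, (a (p.2 z) z z)⁻¹ * a (p.2 z) j k * (pdxx l l v p * pdxx j k v p)
      = ∫ p in halfSpace d, (a (p.2 z) z z)⁻¹ * a (p.2 z) j k * (pdxx k l v p * pdxx j l v p) := by
  have htangential (j : Fin d) {k : Fin d} (i i' : Fin d) (hk : k ≠ z) :=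
    setIntegral_halfSpace_mul_pdxx_mul_pdxx (c := fun x => (a (x z) z z)⁻¹ * a (x z) i i')
      (ha.memLp_top_inv_diag_mul i i' _) (periodic_comp_coord (fun s => (a s z z)⁻¹ * a s i i') hk)
      (periodic_comp_coord (fun s => (a s z z)⁻¹ * a s i i') hl) hv j
  rcases ne_or_eq k z with hk | rfl
  · exact htangential j j k hk
  rcases ne_or_eq j k with hj | rfl
  · rw [pdxx_comm hv.contDiff j k]
    simpa only [mul_comm (pdxx j l v _)] using htangential k j k hj
  · simp_rw [inv_mul_cancel₀ (ha.diag_pos _ _).ne']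
    exact setIntegral_halfSpace_mul_pdxx_mul_pdxx (c := fun _ => 1) (memLp_top_const 1)
      (fun _ _ => rfl) (fun _ _ => rfl) hv j

lemma integral_sum_inv_diag_mul_pdxx_mul_pdxx {l : Fin d} (hl : l ≠ z) :
    ∫ p in halfSpace d,
        ∑ j, ∑ k, (a (p.2 z) z z)⁻¹ * a (p.2 z) j k * (pdxx l l v p * pdxx j k v p)
      = ∫ p in halfSpace d, (a (p.2 z) z z)⁻¹ *
          ∑ j, ∑ k, a (p.2 z) j k * pdxx j l v p * pdxx k l v p := by
  have hint {f g : ℝ × (Fin d → ℝ) → ℝ} (hf : IsTestFunction f) (hg : IsTestFunction g)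
      (j k : Fin d) : IntegrableOn
        (fun p => (a (p.2 z) z z)⁻¹ * a (p.2 z) j k * (f p * g p)) (halfSpace d) :=
    (hg.smooth_mul hf.contDiff).integrable_mul (ha.memLp_top_inv_diag_mul j k _)
  calc _ = ∑ j, ∑ k, ∫ p in halfSpace d,
            (a (p.2 z) z z)⁻¹ * a (p.2 z) j k * (pdxx l l v p * pdxx j k v p) := by
        rw [integral_finsetSum _ fun j _ => integrable_finsetSum _ fun k _ =>
          hint (hv.pdxx l l) (hv.pdxx j k) j k]
        exact Finset.sum_congr rfl fun j _ =>
          integral_finsetSum _ fun k _ => hint (hv.pdxx l l) (hv.pdxx j k) j k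
    _ = ∑ j, ∑ k, ∫ p in halfSpace d,
            (a (p.2 z) z z)⁻¹ * a (p.2 z) j k * (pdxx k l v p * pdxx j l v p) := by
        simp_rw [setIntegral_inv_diag_mul_pdxx_mul_pdxx ha hv hl]
    _ = ∫ p in halfSpace d, ∑ j, ∑ k,
            (a (p.2 z) z z)⁻¹ * a (p.2 z) j k * (pdxx k l v p * pdxx j l v p) := by
        rw [integral_finsetSum _ fun j _ => integrable_finsetSum _ fun k _ =>
          hint (hv.pdxx k l) (hv.pdxx j l) j k]
        exact Finset.sum_congr rfl fun j _ =>
          (integral_finsetSum _ fun k _ => hint (hv.pdxx k l) (hv.pdxx j l) j k).symm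
    _ = _ := by
        simp_rw [Finset.mul_sum, mul_comm (pdxx _ l v _) (pdxx _ l v _), mul_assoc]

lemma integral_inv_diag_mul_op_mul_pdxx {l : Fin d} (hl : l ≠ z) :
    ∫ p in halfSpace d, (a (p.2 z) z z)⁻¹ * (parabolicOp a z v p - v p) * pdxx l l v p
      = (∫ p in halfSpace d, (a (p.2 z) z z)⁻¹ * (pdxx l l v p * pdt v p))
        - (∫ p in halfSpace d, (a (p.2 z) z z)⁻¹ * (pdxx l l v p * v p))
        + ∫ p in halfSpace d, (a (p.2 z) z z)⁻¹ *
            ∑ j, ∑ k, a (p.2 z) j k * pdxx j l v p * pdxx k l v p := by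
  have hint {g : ℝ × (Fin d → ℝ) → ℝ} (hg : IsTestFunction g) :
      IntegrableOn (fun p => (a (p.2 z) z z)⁻¹ * (pdxx l l v p * g p)) (halfSpace d) :=
    (hg.smooth_mul (hv.pdxx l l).contDiff).integrable_mul (ha.memLp_top_inv_diag _)
  rw [← integral_sum_inv_diag_mul_pdxx_mul_pdxx ha hv hl, ← integral_sub (hint hv.pdt) (hint hv),
    ← integral_add]
  · congr 1 with p
    rw [inv_diag_mul_parabolicOp_sub, add_mul]
    simp_rw [Finset.sum_mul]
    congr 1
    · ring
    · exact Finset.sum_congr rfl fun j _ => Finset.sum_congr rfl fun k _ => by ring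
  · exact (hint hv.pdt).sub (hint hv)
  · exact integrable_finsetSum _ fun j _ => integrable_finsetSum _ fun k _ =>
      ((hv.pdxx j k).smooth_mul (hv.pdxx l l).contDiff).integrable_mul
        (ha.memLp_top_inv_diag_mul j k _)

lemma sq_mul_sum_integral_pdxx_sq_le {l : Fin d} (hl : l ≠ z) :
    δ ^ 2 * ∑ j, ∫ p in halfSpace d, pdxx j l v p ^ 2
      ≤ ∫ p in halfSpace d, (a (p.2 z) z z)⁻¹ * (parabolicOp a z v p - v p) * pdxx l l v p := by
  have hb := ha.memLp_top_inv_diag (z := z) volume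
  have hbl := periodic_comp_coord (fun s => (a s z z)⁻¹) hl
  have hb₀ (x : Fin d → ℝ) : 0 ≤ (a (x z) z z)⁻¹ := ha.inv_diag_nonneg _ _
  have ht := setIntegral_halfSpace_mul_pdxx_mul_pdt_nonneg hb hbl hb₀ hv
  have h0 := setIntegral_halfSpace_mul_pdxx_mul_self_nonpos hb hbl hb₀ hv
  have hsq (j : Fin d) : IntegrableOn (fun p => pdxx j l v p ^ 2) (halfSpace d) :=
    ((hv.pdxx j l).memLp 2).integrable_sq
  have helliptic : δ ^ 2 * ∑ j, ∫ p in halfSpace d, pdxx j l v p ^ 2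
      ≤ ∫ p in halfSpace d, (a (p.2 z) z z)⁻¹ *
          ∑ j, ∑ k, a (p.2 z) j k * pdxx j l v p * pdxx k l v p := by
    rw [← integral_finsetSum _ fun j _ => hsq j, ← integral_const_mul]
    refine integral_mono ((integrable_finsetSum _ fun j _ => hsq j).const_mul _) ?_ fun p => ?_
    · simp_rw [Finset.mul_sum, mul_assoc, ← mul_assoc (_⁻¹)]
      exact integrable_finsetSum _ fun j _ => integrable_finsetSum _ fun k _ =>
        ((hv.pdxx k l).smooth_mul (hv.pdxx j l).contDiff).integrable_mul
          (ha.memLp_top_inv_diag_mul j k _)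
    · rw [sq, mul_assoc]
      have hsum : 0 ≤ ∑ j, pdxx j l v p ^ 2 := Finset.sum_nonneg fun j _ => sq_nonneg _
      exact mul_le_mul (ha.le_inv_diag _ z) (ha.lower _ fun j => pdxx j l v p)
        (mul_nonneg ha.pos.le hsum) (hb₀ p.2)
  rw [integral_inv_diag_mul_op_mul_pdxx ha hv hl]
  linarith

lemma integral_inv_diag_mul_op_sq_le :
    ∫ p in halfSpace d, ((a (p.2 z) z z)⁻¹ * (parabolicOp a z v p - v p)) ^ 2
      ≤ δ⁻¹ ^ 2 * ∫ p in halfSpace d, (parabolicOp a z v p - v p) ^ 2 :=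
  integral_mul_sq_le (memLp_parabolicOp_sub ha hv _) fun _ => ha.abs_inv_diag_le _ z

lemma integral_pdxx_sq_le_of_right_ne {l : Fin d} (hl : l ≠ z) (j : Fin d) :
    ∫ p in halfSpace d, pdxx j l v p ^ 2
      ≤ δ⁻¹ ^ 6 * ∫ p in halfSpace d, (parabolicOp a z v p - v p) ^ 2 := by
  have hle (j : Fin d) := Finset.single_le_sum
    (f := fun j => ∫ p in halfSpace d, pdxx j l v p ^ 2)
    (fun j _ => integral_nonneg fun p => sq_nonneg _) (Finset.mem_univ j)
  have henergy := sq_mul_le_integral_sq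
    ((memLp_parabolicOp_sub ha hv _).mul (ha.memLp_top_inv_diag (z := z) _))
    ((hv.pdxx l l).memLp 2) (sq_nonneg δ) (hle l) (sq_mul_sum_integral_pdxx_sq_le ha hv hl)
  have hbound := henergy.trans (integral_inv_diag_mul_op_sq_le ha hv)
  refine (hle j).trans ?_
  rw [← pow_mul, ← le_inv_mul_iff₀ (pow_pos ha.pos _)] at hbound
  exact hbound.trans_eq (by ring)

lemma integral_pdxx_sq_le_of_ne {q : Fin d × Fin d} (hq : q ≠ (z, z)) :
    ∫ p in halfSpace d, pdxx q.1 q.2 v p ^ 2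
      ≤ δ⁻¹ ^ 6 * ∫ p in halfSpace d, (parabolicOp a z v p - v p) ^ 2 := by
  by_cases hq₂ : q.2 = z
  · rw [pdxx_comm hv.contDiff]
    exact integral_pdxx_sq_le_of_right_ne ha hv (fun hq₁ => hq (Prod.ext hq₁ hq₂)) q.2
  · exact integral_pdxx_sq_le_of_right_ne ha hv hq₂ q.1

end TangentialDirections

section HalfSpaceEstimate

variable {d : ℕ} {z : Fin d} {δ : ℝ} {a : ℝ → Fin d → Fin d → ℝ} {v : ℝ × (Fin d → ℝ) → ℝ}

lemma normalOp_eq_sub_sum {p : ℝ × (Fin d → ℝ)} (ha : a (p.2 z) z z ≠ 0) :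
    (a (p.2 z) z z)⁻¹ * (pdt v p - v p) + pdxx z z v p
      = (a (p.2 z) z z)⁻¹ * (parabolicOp a z v p - v p)
        - ∑ q ∈ Finset.univ.erase (z, z),
            (a (p.2 z) z z)⁻¹ * a (p.2 z) q.1 q.2 * pdxx q.1 q.2 v p := by
  rw [inv_diag_mul_parabolicOp_sub, ← Fintype.sum_prod_type',
    ← Finset.add_sum_erase _ _ (Finset.mem_univ (z, z)),
    inv_mul_cancel₀ ha]
  ring

section

variable (ha : IsUniformlyElliptic δ a) (hv : IsTestFunction v)
include ha hv

lemma integral_sum_erase_sq_le :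
    ∫ p in halfSpace d, (∑ q ∈ Finset.univ.erase (z, z),
        (a (p.2 z) z z)⁻¹ * a (p.2 z) q.1 q.2 * pdxx q.1 q.2 v p) ^ 2
      ≤ d ^ 4 * δ⁻¹ ^ 10 * ∫ p in halfSpace d, (parabolicOp a z v p - v p) ^ 2 := by
  set X := ∫ p in halfSpace d, (parabolicOp a z v p - v p) ^ 2
  have hX : 0 ≤ X := integral_nonneg fun p => sq_nonneg _
  have hκ : 0 < δ⁻¹ := inv_pos.2 ha.pos
  have hterm (q : Fin d × Fin d) (hq : q ∈ Finset.univ.erase (z, z)) :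
      ∫ p in halfSpace d, ((a (p.2 z) z z)⁻¹ * a (p.2 z) q.1 q.2 * pdxx q.1 q.2 v p) ^ 2
        ≤ (δ⁻¹ ^ 2) ^ 2 * (δ⁻¹ ^ 6 * X) :=
    (integral_mul_sq_le ((hv.pdxx q.1 q.2).memLp 2) fun p =>
      ha.abs_inv_diag_mul_le _ z q.1 q.2).trans <| mul_le_mul_of_nonneg_left
        (integral_pdxx_sq_le_of_ne ha hv (Finset.ne_of_mem_erase hq)) (sq_nonneg _)
  have hcard : ((Finset.univ.erase (z, z)).card : ℝ) ≤ d ^ 2 := by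
    have := Finset.card_erase_le (s := (Finset.univ : Finset (Fin d × Fin d))) (a := (z, z))
    rw [Finset.card_univ, Fintype.card_prod, Fintype.card_fin, ← sq] at this
    exact_mod_cast this
  have hcauchy := integral_sum_sq_le (μ := volume.restrict (halfSpace d))
    (Finset.univ.erase (z, z)) fun q : Fin d × Fin d =>
      ((hv.pdxx q.1 q.2).memLp 2).mul (ha.memLp_top_inv_diag_mul (z := z) q.1 q.2 _)
  refine hcauchy.trans ?_
  calc _ ≤ (d : ℝ) ^ 2 * ∑ _q ∈ Finset.univ.erase (z, z), (δ⁻¹ ^ 2) ^ 2 * (δ⁻¹ ^ 6 * X) :=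
        mul_le_mul hcard (Finset.sum_le_sum hterm)
          (Finset.sum_nonneg fun q _ => integral_nonneg fun p => sq_nonneg _) (by positivity)
    _ ≤ (d : ℝ) ^ 2 * (d ^ 2 * ((δ⁻¹ ^ 2) ^ 2 * (δ⁻¹ ^ 6 * X))) := by
        rw [Finset.sum_const, nsmul_eq_mul]
        gcongr
    _ = d ^ 4 * δ⁻¹ ^ 10 * X := by ring

lemma integral_normalOp_sq_le :
    ∫ p in halfSpace d, ((a (p.2 z) z z)⁻¹ * (pdt v p - v p) + pdxx z z v p) ^ 2
      ≤ (2 * δ⁻¹ ^ 2 + 2 * d ^ 4 * δ⁻¹ ^ 10)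
        * ∫ p in halfSpace d, (parabolicOp a z v p - v p) ^ 2 := by
  simp_rw [fun p : ℝ × (Fin d → ℝ) => normalOp_eq_sub_sum (v := v) (ha.diag_pos (p.2 z) z).ne']
  have hsplit := integral_sub_sq_le (μ := volume.restrict (halfSpace d))
    ((memLp_parabolicOp_sub (z := z) ha hv _).mul (ha.memLp_top_inv_diag (z := z) _))
    (memLp_finsetSum (Finset.univ.erase (z, z)) fun q _ =>
      ((hv.pdxx q.1 q.2).memLp 2).mul (ha.memLp_top_inv_diag_mul (z := z) q.1 q.2 _))
  have hop := integral_inv_diag_mul_op_sq_le (z := z) ha hv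
  have hsum := integral_sum_erase_sq_le (z := z) ha hv
  simp only [Pi.mul_apply] at hsplit
  linarith

lemma integral_pdt_sq_le :
    ∫ p in halfSpace d, pdt v p ^ 2 ≤ δ⁻¹ ^ 2 *
      ∫ p in halfSpace d, ((a (p.2 z) z z)⁻¹ * (pdt v p - v p) + pdxx z z v p) ^ 2 := by
  rw [inv_pow, le_inv_mul_iff₀ (pow_pos ha.pos 2)]
  exact sq_mul_integral_pdt_sq_le (ha.memLp_top_inv_diag _) ha.pos.le
    (fun x => ha.le_inv_diag (x z) z) hv z

lemma integral_sq_le :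
    ∫ p in halfSpace d, v p ^ 2 ≤ δ⁻¹ ^ 2 *
      ∫ p in halfSpace d, ((a (p.2 z) z z)⁻¹ * (pdt v p - v p) + pdxx z z v p) ^ 2 := by
  rw [inv_pow, le_inv_mul_iff₀ (pow_pos ha.pos 2)]
  exact sq_mul_integral_sq_le (ha.memLp_top_inv_diag _) ha.pos.le
    (fun x => ha.le_inv_diag (x z) z) hv z

lemma integral_pdxx_self_sq_le :
    ∫ p in halfSpace d, pdxx z z v p ^ 2 ≤ (2 + 8 * δ⁻¹ ^ 4) *
      ∫ p in halfSpace d, ((a (p.2 z) z z)⁻¹ * (pdt v p - v p) + pdxx z z v p) ^ 2 := by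
  have hb := ha.memLp_top_inv_diag (z := z) volume
  have hdiff : MemLp (fun p => pdt v p - v p) 2 (volume.restrict (halfSpace d)) :=
    (hv.pdt.memLp 2).sub (hv.memLp 2)
  have hsplit := integral_sub_sq_le (memLp_normalOp (b := fun x => (a (x z) z z)⁻¹) hb hv z)
    (hdiff.mul (hb.restrict _))
  have hmul := integral_mul_sq_le hdiff fun p => ha.abs_inv_diag_le (p.2 z) z
  have hsub := integral_sub_sq_le (μ := volume.restrict (halfSpace d)) (hv.pdt.memLp 2) (hv.memLp 2)
  have ht := integral_pdt_sq_le (z := z) ha hv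
  have h₀ := integral_sq_le (z := z) ha hv
  have hκ : 0 ≤ δ⁻¹ ^ 2 := sq_nonneg _
  simp only [Pi.mul_apply, add_sub_cancel_left] at hsplit
  linarith [mul_le_mul_of_nonneg_left hsub hκ, mul_le_mul_of_nonneg_left ht hκ,
    mul_le_mul_of_nonneg_left h₀ hκ]

end

/-- The integrand `|v|² + |v_t|² + |v_x|² + |v_xx|²` of the squared `W^{1,2}_2` norm. -/
noncomputable def sobolevDensity (v : ℝ × (Fin d → ℝ) → ℝ) : ℝ × (Fin d → ℝ) → ℝ :=
  fun p => v p ^ 2 + pdt v p ^ 2 + (∑ j, pdx j v p ^ 2) + ∑ j, ∑ k, pdxx j k v p ^ 2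

lemma integral_sobolevDensity {μ : Measure (ℝ × (Fin d → ℝ))} [IsFiniteMeasureOnCompacts μ]
    (hv : IsTestFunction v) :
    ∫ p, sobolevDensity v p ∂μ
      = ∫ p, v p ^ 2 ∂μ + ∫ p, pdt v p ^ 2 ∂μ + ∑ j, ∫ p, pdx j v p ^ 2 ∂μ
        + ∑ j, ∑ k, ∫ p, pdxx j k v p ^ 2 ∂μ := by
  have hsq {f : ℝ × (Fin d → ℝ) → ℝ} (hf : IsTestFunction f) :
      Integrable (fun p => f p ^ 2) μ := (hf.memLp 2).integrable_sq
  have hx := integrable_finsetSum Finset.univ fun j _ => hsq (hv.pdx j)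
  have hxx (j : Fin d) := integrable_finsetSum Finset.univ fun k _ => hsq (hv.pdxx j k)
  unfold sobolevDensity
  rw [integral_add (((hsq hv).fun_add (hsq hv.pdt)).fun_add hx)
      (integrable_finsetSum _ fun j _ => hxx j),
    integral_add ((hsq hv).fun_add (hsq hv.pdt)) hx, integral_add (hsq hv) (hsq hv.pdt),
    integral_finsetSum _ fun j _ => hsq (hv.pdx j), integral_finsetSum _ fun j _ => hxx j]
  simp_rw [fun j => integral_finsetSum Finset.univ fun k _ => hsq (hv.pdxx j k)]

lemma integrable_sobolevDensity {μ : Measure (ℝ × (Fin d → ℝ))} [IsFiniteMeasureOnCompacts μ]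
    (hv : IsTestFunction v) : Integrable (sobolevDensity v) μ :=
  (((hv.memLp 2).integrable_sq.add (hv.pdt.memLp 2).integrable_sq).add
    (integrable_finsetSum _ fun j _ => ((hv.pdx j).memLp 2).integrable_sq)).add
      (integrable_finsetSum _ fun j _ => integrable_finsetSum _ fun k _ =>
        ((hv.pdxx j k).memLp 2).integrable_sq)

lemma integral_sobolevDensity_le_of_forall {M : ℝ} (hv : IsTestFunction v)
    (h₀ : ∫ p in halfSpace d, v p ^ 2 ≤ M) (ht : ∫ p in halfSpace d, pdt v p ^ 2 ≤ M)
    (hxx : ∀ j k, ∫ p in halfSpace d, pdxx j k v p ^ 2 ≤ M) :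
    ∫ p in halfSpace d, sobolevDensity v p ≤ (2 + d + d ^ 2) * M := by
  have hx (j : Fin d) : ∫ p in halfSpace d, pdx j v p ^ 2 ≤ M :=
    (integral_pdx_sq_le hv j).trans (by linarith [hxx j j])
  have hsum_x := Finset.sum_le_card_nsmul Finset.univ _ _ fun j _ => hx j
  have hsum_xx := Finset.sum_le_card_nsmul Finset.univ _ _ fun j _ =>
    Finset.sum_le_card_nsmul Finset.univ _ _ fun k _ => hxx j k
  simp only [Finset.card_univ, Fintype.card_fin, nsmul_eq_mul] at hsum_x hsum_xx
  rw [integral_sobolevDensity hv]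
  linarith

theorem exists_integral_sobolevDensity_le (d : ℕ) {δ : ℝ} (hδ : 0 < δ) :
    ∃ C : ℝ, 0 < C ∧ ∀ (z : Fin d) (a : ℝ → Fin d → Fin d → ℝ), IsUniformlyElliptic δ a →
      ∀ v, IsTestFunction v →
        ∫ p in halfSpace d, sobolevDensity v p
          ≤ C * ∫ p in halfSpace d, (parabolicOp a z v p - v p) ^ 2 := by
  set κ := δ⁻¹
  have hκ : 0 < κ := inv_pos.2 hδ
  let C₁ : ℝ := 2 * κ ^ 2 + 2 * d ^ 4 * κ ^ 10
  refine ⟨(2 + d + d ^ 2) * (κ ^ 6 + (κ ^ 2 + (2 + 8 * κ ^ 4)) * C₁), by positivity,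
    fun z a ha v hv => ?_⟩
  set X := ∫ p in halfSpace d, (parabolicOp a z v p - v p) ^ 2
  set Y := ∫ p in halfSpace d, ((a (p.2 z) z z)⁻¹ * (pdt v p - v p) + pdxx z z v p) ^ 2
  have hX₀ : 0 ≤ κ ^ 6 * X := mul_nonneg (by positivity) (integral_nonneg fun p => sq_nonneg _)
  have hY₀ : 0 ≤ Y := integral_nonneg fun p => sq_nonneg _
  have hY₁ : 0 ≤ κ ^ 2 * Y := by positivity
  have hY₂ : 0 ≤ (2 + 8 * κ ^ 4) * Y := by positivity
  have hYX : Y ≤ C₁ * X := integral_normalOp_sq_le ha hv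
  have hxx (j k : Fin d) : ∫ p in halfSpace d, pdxx j k v p ^ 2
      ≤ κ ^ 6 * X + (κ ^ 2 + (2 + 8 * κ ^ 4)) * Y := by
    by_cases hjk : (j, k) = (z, z)
    · obtain ⟨hj, hk⟩ := Prod.mk.inj hjk
      rw [hj, hk]
      exact (integral_pdxx_self_sq_le ha hv).trans (by linarith)
    · exact (integral_pdxx_sq_le_of_ne ha hv hjk).trans (by linarith)
  refine (integral_sobolevDensity_le_of_forall hv
    ((integral_sq_le (z := z) ha hv).trans (by linarith))
    ((integral_pdt_sq_le (z := z) ha hv).trans (by linarith)) hxx).trans ?_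
  calc _ ≤ (2 + d + d ^ 2) * (κ ^ 6 * X + (κ ^ 2 + (2 + 8 * κ ^ 4)) * (C₁ * X)) := by gcongr
    _ = _ := by ring

end HalfSpaceEstimate

/-! ### Cutoff functions -/

section Cutoff

lemma hasCompactSupport_deriv_smoothTransition :
    HasCompactSupport (deriv Real.smoothTransition) := by
  refine HasCompactSupport.intro (isCompact_Icc (a := (0 : ℝ)) (b := 1)) fun x hx => ?_
  rcases not_and_or.1 hx with hx | hx <;> rw [not_le] at hx
  · have hconst : Real.smoothTransition =ᶠ[𝓝 x] fun _ => 0 := by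
      filter_upwards [Iio_mem_nhds hx] with y hy
      exact Real.smoothTransition.zero_of_nonpos hy.le
    rw [hconst.deriv_eq, deriv_const]
  · have hconst : Real.smoothTransition =ᶠ[𝓝 x] fun _ => 1 := by
      filter_upwards [Ioi_mem_nhds hx] with y hy
      exact Real.smoothTransition.one_of_one_le hy.le
    rw [hconst.deriv_eq, deriv_const]

lemma contDiff_deriv_smoothTransition : ContDiff ℝ ∞ (deriv Real.smoothTransition) :=
  (contDiff_infty_iff_deriv.1 Real.smoothTransition.contDiff).2

lemma exists_abs_deriv_smoothTransition_le :
    ∃ M : ℝ, (∀ x, |deriv Real.smoothTransition x| ≤ M) ∧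
      ∀ x, |deriv (deriv Real.smoothTransition) x| ≤ M := by
  have hsupp := hasCompactSupport_deriv_smoothTransition
  obtain ⟨M₁, h₁⟩ := hsupp.exists_bound_of_continuous contDiff_deriv_smoothTransition.continuous
  obtain ⟨M₂, h₂⟩ := hsupp.deriv.exists_bound_of_continuous
    (contDiff_infty_iff_deriv.1 contDiff_deriv_smoothTransition).2.continuous
  exact ⟨max M₁ M₂, fun x => (h₁ x).trans (le_max_left _ _),
    fun x => (h₂ x).trans (le_max_right _ _)⟩

lemma abs_smoothTransition_le_one (x : ℝ) : |Real.smoothTransition x| ≤ 1 :=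
  (abs_of_nonneg (Real.smoothTransition.nonneg x)).trans_le (Real.smoothTransition.le_one x)

/-- A cutoff between the parabolic cylinders `Q_r` and `Q_R`, with derivatives controlled by the
parabolic scaling of `R - r`. It is only required to vanish off `Q_R` for positive times, so it may
stay away from zero at the bottom `t = 0` of the cylinder. -/
structure IsCutoff {d : ℕ} (K r R : ℝ) (η : ℝ × (Fin d → ℝ) → ℝ) : Prop where
  contDiff : ContDiff ℝ ∞ η
  nonneg : 0 ≤ η
  le_one : η ≤ 1
  eq_one : ∀ p ∈ Qc d r, η p = 1
  eq_zero : ∀ p ∈ halfSpace d \ Qc d R, η p = 0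
  abs_pdt_le : ∀ p ∈ Qc d R, |pdt η p| ≤ K * (R - r)⁻¹ ^ 2
  abs_pdx_le : ∀ j, ∀ p ∈ Qc d R, |pdx j η p| ≤ K * (R - r)⁻¹
  abs_pdxx_le : ∀ j k, ∀ p ∈ Qc d R, |pdxx j k η p| ≤ K * (R - r)⁻¹ ^ 2

/-- A smooth function of `t` and `|x|²` equal to `1` where both are at most `R² - W` and to `0`
where one of them is at least `R²`. -/
noncomputable def cylinderCutoff (d : ℕ) (R W : ℝ) (p : ℝ × (Fin d → ℝ)) : ℝ :=
  Real.smoothTransition ((R ^ 2 - p.1) / W) *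
    Real.smoothTransition ((R ^ 2 - ∑ i, p.2 i ^ 2) / W)

variable {d : ℕ} (R W : ℝ)

lemma dirDeriv_sub_fst_div (w p : ℝ × (Fin d → ℝ)) :
    dirDeriv w (fun q : ℝ × (Fin d → ℝ) => (R ^ 2 - q.1) / W) p = -w.1 / W := by
  have h := ((hasFDerivAt_fst (𝕜 := ℝ) (p := p)).const_sub (R ^ 2)).mul_const W⁻¹
  simp only [dirDeriv, div_eq_mul_inv, h.fderiv]
  simp [mul_comm]

lemma dirDeriv_sub_sum_sq_div (w p : ℝ × (Fin d → ℝ)) :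
    dirDeriv w (fun q : ℝ × (Fin d → ℝ) => (R ^ 2 - ∑ i, q.2 i ^ 2) / W) p
      = -2 / W * ∑ i, p.2 i * w.2 i := by
  have hcoord (i : Fin d) :=
    (((hasFDerivAt_apply (𝕜 := ℝ) i p.2).comp p hasFDerivAt_snd).pow 2)
  have h := ((HasFDerivAt.fun_sum fun i (_ : i ∈ Finset.univ) => hcoord i).const_sub
    (R ^ 2)).mul_const W⁻¹
  simp only [div_eq_mul_inv]
  refine congr($(h.fderiv) w).trans ?_
  simp [Finset.mul_sum, mul_assoc, mul_comm, mul_left_comm]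

lemma contDiff_cylinderCutoff : ContDiff ℝ ∞ (cylinderCutoff d R W) := by
  have hs : ContDiff ℝ ∞ Real.smoothTransition := Real.smoothTransition.contDiff
  unfold cylinderCutoff
  fun_prop

lemma dirDeriv_comp_mul_comp {s₁ s₂ : ℝ → ℝ} (h₁ : ContDiff ℝ ∞ s₁) (h₂ : ContDiff ℝ ∞ s₂)
    (w p : ℝ × (Fin d → ℝ)) :
    dirDeriv w (fun q : ℝ × (Fin d → ℝ) =>
        s₁ ((R ^ 2 - q.1) / W) * s₂ ((R ^ 2 - ∑ i, q.2 i ^ 2) / W)) p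
      = deriv s₁ ((R ^ 2 - p.1) / W) * (-w.1 / W) * s₂ ((R ^ 2 - ∑ i, p.2 i ^ 2) / W)
        + s₁ ((R ^ 2 - p.1) / W) * (deriv s₂ ((R ^ 2 - ∑ i, p.2 i ^ 2) / W)
          * (-2 / W * ∑ i, p.2 i * w.2 i)) := by
  have h₁' := h₁.differentiable (by simp)
  have h₂' := h₂.differentiable (by simp)
  rw [dirDeriv_mul (by fun_prop) (by fun_prop), dirDeriv_comp (h₁' _) (by fun_prop),
    dirDeriv_comp (h₂' _) (by fun_prop), dirDeriv_sub_fst_div, dirDeriv_sub_sum_sq_div]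

lemma pdt_cylinderCutoff (p : ℝ × (Fin d → ℝ)) :
    pdt (cylinderCutoff d R W) p
      = deriv Real.smoothTransition ((R ^ 2 - p.1) / W) * (-1 / W)
        * Real.smoothTransition ((R ^ 2 - ∑ i, p.2 i ^ 2) / W) :=
  (dirDeriv_comp_mul_comp R W Real.smoothTransition.contDiff Real.smoothTransition.contDiff
    (1, 0) p).trans (by simp)

lemma pdx_cylinderCutoff (j : Fin d) (p : ℝ × (Fin d → ℝ)) :
    pdx j (cylinderCutoff d R W) p
      = Real.smoothTransition ((R ^ 2 - p.1) / W)
        * deriv Real.smoothTransition ((R ^ 2 - ∑ i, p.2 i ^ 2) / W) * (-2 / W * p.2 j) :=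
  (dirDeriv_comp_mul_comp R W Real.smoothTransition.contDiff Real.smoothTransition.contDiff
    (0, Pi.single j 1) p).trans (by simp [Pi.single_apply, mul_assoc])

lemma dirDeriv_const_mul_coord (c : ℝ) (k : Fin d) (w p : ℝ × (Fin d → ℝ)) :
    dirDeriv w (fun q : ℝ × (Fin d → ℝ) => c * q.2 k) p = c * w.2 k := by
  have h := ((hasFDerivAt_apply (𝕜 := ℝ) k p.2).comp p hasFDerivAt_snd).const_mul c
  exact congr($(h.fderiv) w)

lemma pdxx_cylinderCutoff (j k : Fin d) (p : ℝ × (Fin d → ℝ)) :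
    pdxx j k (cylinderCutoff d R W) p
      = Real.smoothTransition ((R ^ 2 - p.1) / W)
        * (deriv (deriv Real.smoothTransition) ((R ^ 2 - ∑ i, p.2 i ^ 2) / W)
            * (-2 / W * p.2 j) * (-2 / W * p.2 k)
          + deriv Real.smoothTransition ((R ^ 2 - ∑ i, p.2 i ^ 2) / W)
            * if k = j then -2 / W else 0) := by
  have hs : ContDiff ℝ ∞ Real.smoothTransition := Real.smoothTransition.contDiff
  have hs' := contDiff_deriv_smoothTransition
  have hprofile : ContDiff ℝ ∞ fun q : ℝ × (Fin d → ℝ) =>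
      Real.smoothTransition ((R ^ 2 - q.1) / W)
        * deriv Real.smoothTransition ((R ^ 2 - ∑ i, q.2 i ^ 2) / W) := by fun_prop
  rw [pdxx, funext (pdx_cylinderCutoff R W k)]
  change dirDeriv (0, Pi.single j 1) _ p = _
  rw [dirDeriv_mul (hprofile.differentiable (by simp) p) (by fun_prop),
    dirDeriv_comp_mul_comp R W hs hs', dirDeriv_const_mul_coord]
  simp only [Pi.single_apply, mul_ite, mul_one, mul_zero, Finset.sum_ite_eq', Finset.mem_univ,
    if_true, neg_zero, zero_div, zero_mul, zero_add]
  split_ifs <;> ring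

variable {R W}

lemma cylinderCutoff_eq_one {r : ℝ} (hrR : r ^ 2 < R ^ 2) {p : ℝ × (Fin d → ℝ)}
    (hp : p ∈ Qc d r) : cylinderCutoff d R (R ^ 2 - r ^ 2) p = 1 := by
  have hW : 0 < R ^ 2 - r ^ 2 := sub_pos.2 hrR
  rw [cylinderCutoff, Real.smoothTransition.one_of_one_le, Real.smoothTransition.one_of_one_le,
    one_mul]
  · exact (one_le_div₀ hW).2 (sub_le_sub_left hp.2.le _)
  · exact (one_le_div₀ hW).2 (sub_le_sub_left hp.1.2.le _)

lemma cylinderCutoff_eq_zero (hW : 0 ≤ W) {p : ℝ × (Fin d → ℝ)} (hp : p ∈ halfSpace d \ Qc d R) :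
    cylinderCutoff d R W p = 0 := by
  have hzero {x : ℝ} (hx : R ^ 2 ≤ x) : Real.smoothTransition ((R ^ 2 - x) / W) = 0 :=
    Real.smoothTransition.zero_of_nonpos (div_nonpos_of_nonpos_of_nonneg (sub_nonpos.2 hx) hW)
  by_cases ht : p.1 < R ^ 2
  · have hx : R ^ 2 ≤ ∑ i, p.2 i ^ 2 := not_lt.1 fun hx => hp.2 ⟨⟨hp.1.1, ht⟩, hx⟩
    rw [cylinderCutoff, hzero hx, mul_zero]
  · rw [cylinderCutoff, hzero (not_lt.1 ht), zero_mul]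

section Bounds

variable {M ρ : ℝ} (hM₁ : ∀ x, |deriv Real.smoothTransition x| ≤ M) (hρ : 0 < ρ)
  {p : ℝ × (Fin d → ℝ)}

include hρ in
lemma abs_div_mul_coord_le (hR : 0 ≤ R) (hW : 0 < W) (hRW : ρ * R ≤ W) (hp : p ∈ Qc d R)
    (j : Fin d) : |-2 / W * p.2 j| ≤ 2 * ρ⁻¹ := by
  have hx : |p.2 j| ≤ R := abs_le_of_sq_le_sq
    ((Finset.single_le_sum (f := fun i => p.2 i ^ 2) (fun i _ => sq_nonneg _)
      (Finset.mem_univ j)).trans hp.2.le) hR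
  rw [abs_mul, abs_div, abs_neg, abs_two, abs_of_pos hW, div_mul_eq_mul_div,
    div_le_iff₀ hW, mul_assoc]
  gcongr
  rw [← div_eq_inv_mul, le_div_iff₀ hρ]
  nlinarith

include hM₁ hρ

lemma abs_pdt_cylinderCutoff_le (hρW : ρ ^ 2 ≤ W) :
    |pdt (cylinderCutoff d R W) p| ≤ M * ρ⁻¹ ^ 2 := by
  have hM : 0 ≤ M := (abs_nonneg _).trans (hM₁ 0)
  have hW : 0 < W := (pow_pos hρ 2).trans_le hρW
  rw [pdt_cylinderCutoff, abs_mul, abs_mul, abs_div, abs_neg, abs_one, abs_of_pos hW]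
  calc _ ≤ M * (1 / ρ ^ 2) * 1 := by
        gcongr
        exacts [hM₁ _, abs_smoothTransition_le_one _]
    _ = _ := by rw [mul_one, one_div, inv_pow]

lemma abs_pdx_cylinderCutoff_le (hR : 0 ≤ R) (hW : 0 < W) (hRW : ρ * R ≤ W) (hp : p ∈ Qc d R)
    (j : Fin d) : |pdx j (cylinderCutoff d R W) p| ≤ 2 * M * ρ⁻¹ := by
  have hM : 0 ≤ M := (abs_nonneg _).trans (hM₁ 0)
  rw [pdx_cylinderCutoff, abs_mul, abs_mul]
  calc _ ≤ 1 * M * (2 * ρ⁻¹) := by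
        gcongr
        exacts [abs_smoothTransition_le_one _, hM₁ _, abs_div_mul_coord_le hρ hR hW hRW hp j]
    _ = _ := by ring

lemma abs_pdxx_cylinderCutoff_le (hM₂ : ∀ x, |deriv (deriv Real.smoothTransition) x| ≤ M)
    (hR : 0 ≤ R) (hρW : ρ ^ 2 ≤ W) (hRW : ρ * R ≤ W) (hp : p ∈ Qc d R) (j k : Fin d) :
    |pdxx j k (cylinderCutoff d R W) p| ≤ 6 * M * ρ⁻¹ ^ 2 := by
  have hM : 0 ≤ M := (abs_nonneg _).trans (hM₁ 0)
  have hW : 0 < W := (pow_pos hρ 2).trans_le hρW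
  have hcoord := abs_div_mul_coord_le hρ hR hW hRW hp
  have hdiag : |if k = j then -2 / W else 0| ≤ 2 * ρ⁻¹ ^ 2 := by
    split_ifs
    · rw [abs_div, abs_neg, abs_two, abs_of_pos hW, inv_pow, ← div_eq_mul_inv]
      gcongr
    · rw [abs_zero]
      positivity
  rw [pdxx_cylinderCutoff, abs_mul]
  calc _ ≤ 1 * (M * (2 * ρ⁻¹) * (2 * ρ⁻¹) + M * (2 * ρ⁻¹ ^ 2)) := by
        refine mul_le_mul (abs_smoothTransition_le_one _) ((abs_add_le _ _).trans ?_)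
          (abs_nonneg _) zero_le_one
        simp_rw [abs_mul _ (-2 / W * _), abs_mul _ (ite _ _ _)]
        gcongr
        exacts [hM₂ _, hcoord j, hcoord k, hM₁ _]
    _ = _ := by ring

end Bounds

lemma exists_isCutoff : ∃ K : ℝ, 0 ≤ K ∧ ∀ (d : ℕ) (r R : ℝ), 0 ≤ r → r < R →
    IsCutoff K r R (cylinderCutoff d R (R ^ 2 - r ^ 2)) := by
  obtain ⟨M, hM₁, hM₂⟩ := exists_abs_deriv_smoothTransition_le
  have hM : 0 ≤ M := (abs_nonneg _).trans (hM₁ 0)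
  refine ⟨6 * M, by positivity, fun d r R hr hrR => ?_⟩
  have hρ : 0 < R - r := sub_pos.2 hrR
  have hR : 0 ≤ R := hr.trans hrR.le
  have hρW : (R - r) ^ 2 ≤ R ^ 2 - r ^ 2 := by nlinarith
  have hRW : (R - r) * R ≤ R ^ 2 - r ^ 2 := by nlinarith
  have hW : 0 < R ^ 2 - r ^ 2 := (pow_pos hρ 2).trans_le hρW
  exact {
    contDiff := contDiff_cylinderCutoff R _
    nonneg := fun p => mul_nonneg (Real.smoothTransition.nonneg _) (Real.smoothTransition.nonneg _)
    le_one := fun p => mul_le_one₀ (Real.smoothTransition.le_one _)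
      (Real.smoothTransition.nonneg _) (Real.smoothTransition.le_one _)
    eq_one := fun p hp => cylinderCutoff_eq_one (sub_pos.1 hW) hp
    eq_zero := fun p hp => cylinderCutoff_eq_zero hW.le hp
    abs_pdt_le := fun p _ => (abs_pdt_cylinderCutoff_le hM₁ hρ hρW).trans
      (by gcongr; linarith)
    abs_pdx_le := fun j p hp => (abs_pdx_cylinderCutoff_le hM₁ hρ hR hW hRW hp j).trans
      (by gcongr; norm_num)
    abs_pdxx_le := fun j k p hp =>
      abs_pdxx_cylinderCutoff_le hM₁ hρ hM₂ hR hρW hRW hp j k }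

end Cutoff

/-! ### The local estimate -/

lemma isOpen_Qc (d : ℕ) (r : ℝ) : IsOpen (Qc d r) :=
  isOpen_Ioo.prod (isOpen_lt (by fun_prop) continuous_const)

lemma measurableSet_Qc (d : ℕ) (r : ℝ) : MeasurableSet (Qc d r) := (isOpen_Qc d r).measurableSet

lemma Qc_subset_halfSpace (d : ℕ) (r : ℝ) : Qc d r ⊆ halfSpace d := fun _ hp => ⟨hp.1.1, trivial⟩

lemma Qc_mono (d : ℕ) {r R : ℝ} (hr : 0 ≤ r) (hrR : r ≤ R) : Qc d r ⊆ Qc d R := by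
  have hsq : r ^ 2 ≤ R ^ 2 := by gcongr
  exact Set.prod_mono (Set.Ioo_subset_Ioo_right hsq) fun x hx => lt_of_lt_of_le hx hsq

lemma isCompact_closure_Qc (d : ℕ) (R : ℝ) : IsCompact (closure (Qc d R)) := by
  have hbox : IsCompact (Set.Icc 0 (R ^ 2) ×ˢ
      Set.Icc (fun _ : Fin d => -|R|) (fun _ : Fin d => |R|)) :=
    isCompact_Icc.prod isCompact_Icc
  refine hbox.closure_of_subset (Set.prod_mono Set.Ioo_subset_Icc_self fun x hx => ?_)
  have hx_le (j : Fin d) : |x j| ≤ |R| :=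
    sq_le_sq.1 ((Finset.single_le_sum (f := fun j => x j ^ 2) (fun _ _ => sq_nonneg _)
      (Finset.mem_univ j)).trans hx.le)
  exact ⟨fun j => (abs_le.1 (hx_le j)).1, fun j => (abs_le.1 (hx_le j)).2⟩

section Localization

variable {d : ℕ} {z : Fin d} {δ K r R : ℝ} {a : ℝ → Fin d → Fin d → ℝ}
  {η u : ℝ × (Fin d → ℝ) → ℝ}

/-- The coefficient of `u` in the commutator of the multiplication by `η²` with `L₀`. -/
noncomputable def cutoffPotential (a : ℝ → Fin d → Fin d → ℝ) (z : Fin d)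
    (η : ℝ × (Fin d → ℝ) → ℝ) (p : ℝ × (Fin d → ℝ)) : ℝ :=
  2 * (η p * pdt η p)
    + ∑ j, ∑ k, a (p.2 z) j k * (2 * (pdx j η p * pdx k η p + η p * pdxx j k η p))

/-- The coefficient of `η u_{x^j}` in the commutator of the multiplication by `η²` with `L₀`. -/
noncomputable def cutoffDrift (a : ℝ → Fin d → Fin d → ℝ) (z : Fin d)
    (η : ℝ × (Fin d → ℝ) → ℝ) (j : Fin d) (p : ℝ × (Fin d → ℝ)) : ℝ :=
  ∑ k, a (p.2 z) j k * (4 * pdx k η p)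

lemma sum_sum_mul_add_swap {ι : Type*} [Fintype ι] {A : ι → ι → ℝ} (hA : ∀ j k, A j k = A k j)
    (b y : ι → ℝ) :
    ∑ j, ∑ k, A j k * (2 * (b j * y k + b k * y j)) = ∑ j, (∑ k, A j k * (4 * b k)) * y j := by
  have hswap : ∑ j, ∑ k, A j k * (2 * (b j * y k)) = ∑ j, ∑ k, A j k * (2 * (b k * y j)) := by
    rw [Finset.sum_comm]
    exact Finset.sum_congr rfl fun j _ => Finset.sum_congr rfl fun k _ => by rw [hA]
  simp only [mul_add, Finset.sum_add_distrib, hswap, Finset.sum_mul]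
  simp only [← Finset.sum_add_distrib]
  exact Finset.sum_congr rfl fun j _ => Finset.sum_congr rfl fun k _ => by ring

section Commutator

variable (hη : ContDiff ℝ ∞ η) (hu : ContDiff ℝ ∞ u) (p : ℝ × (Fin d → ℝ))
include hη hu

lemma pdt_sq_mul :
    pdt (fun q => η q ^ 2 * u q) p = 2 * η p * pdt η p * u p + η p ^ 2 * pdt u p :=
  dirDeriv_sq_mul hη hu _ p

lemma pdx_sq_mul (j : Fin d) :
    pdx j (fun q => η q ^ 2 * u q) p = 2 * η p * pdx j η p * u p + η p ^ 2 * pdx j u p :=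
  dirDeriv_sq_mul hη hu _ p

lemma pdxx_sq_mul (j k : Fin d) :
    pdxx j k (fun q => η q ^ 2 * u q) p
      = η p ^ 2 * pdxx j k u p + 2 * (pdx j η p * pdx k η p + η p * pdxx j k η p) * u p
        + 2 * (pdx j η p * (η p * pdx k u p) + pdx k η p * (η p * pdx j u p)) :=
  dirDeriv_dirDeriv_sq_mul hη hu _ _ p

lemma parabolicOp_sq_mul_sub (ha : ∀ s j k, a s j k = a s k j) :
    parabolicOp a z (fun q => η q ^ 2 * u q) p - η p ^ 2 * u p
      = η p ^ 2 * (parabolicOp a z u p - u p) + cutoffPotential a z η p * u p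
        + ∑ j, cutoffDrift a z η j p * (η p * pdx j u p) := by
  have hxx (j k : Fin d) : a (p.2 z) j k * pdxx j k (fun q => η q ^ 2 * u q) p
      = η p ^ 2 * (a (p.2 z) j k * pdxx j k u p)
        + a (p.2 z) j k * (2 * (pdx j η p * pdx k η p + η p * pdxx j k η p)) * u p
        + a (p.2 z) j k * (2 * (pdx j η p * (η p * pdx k u p)
          + pdx k η p * (η p * pdx j u p))) := by
    rw [pdxx_sq_mul hη hu]
    ring
  unfold cutoffDrift
  rw [← sum_sum_mul_add_swap (ha _)]
  simp only [parabolicOp, cutoffPotential, pdt_sq_mul hη hu, hxx, Finset.sum_add_distrib,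
    ← Finset.mul_sum, ← Finset.sum_mul]
  ring

end Commutator

/-- The bound of `cutoffPotential` in units of `(R - r)⁻²`. -/
noncomputable def potentialBound (d : ℕ) (δ K : ℝ) : ℝ := 2 * K + d ^ 2 * (δ⁻¹ * (2 * (K ^ 2 + K)))

/-- The bound of `cutoffDrift` in units of `(R - r)⁻¹`. -/
noncomputable def driftBound (d : ℕ) (δ K : ℝ) : ℝ := d * (δ⁻¹ * (4 * K))

section Bounds

variable (ha : IsUniformlyElliptic δ a) (hη : IsCutoff K r R η) {p : ℝ × (Fin d → ℝ)}
  (hp : p ∈ Qc d R)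

lemma IsCutoff.abs_le_one (hη : IsCutoff K r R η) (p : ℝ × (Fin d → ℝ)) : |η p| ≤ 1 :=
  (abs_of_nonneg (hη.nonneg p)).trans_le (hη.le_one p)

include ha hη hp

lemma abs_cutoffPotential_le :
    |cutoffPotential a z η p| ≤ potentialBound d δ K * (R - r)⁻¹ ^ 2 := by
  set σ := (R - r)⁻¹
  have ht : |2 * (η p * pdt η p)| ≤ 2 * (1 * (K * σ ^ 2)) := by
    rw [abs_mul, abs_mul, abs_two]
    gcongr
    exacts [hη.abs_le_one p, hη.abs_pdt_le p hp]
  have hxx (j k : Fin d) :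
      |a (p.2 z) j k * (2 * (pdx j η p * pdx k η p + η p * pdxx j k η p))|
        ≤ δ⁻¹ * (2 * (K * σ * (K * σ) + 1 * (K * σ ^ 2))) := by
    have hKσ : 0 ≤ K * σ := (abs_nonneg _).trans (hη.abs_pdx_le j p hp)
    have hδ : 0 ≤ δ⁻¹ := (inv_pos.2 ha.pos).le
    rw [abs_mul, abs_mul, abs_two]
    refine mul_le_mul (ha.abs_coeff_le _ j k) (mul_le_mul_of_nonneg_left ((abs_add_le _ _).trans ?_)
      zero_le_two) (by positivity) hδ
    rw [abs_mul, abs_mul]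
    gcongr
    exacts [hη.abs_pdx_le j p hp, hη.abs_pdx_le k p hp, hη.abs_le_one p, hη.abs_pdxx_le j k p hp]
  calc _ ≤ 2 * (1 * (K * σ ^ 2))
        + ∑ j : Fin d, ∑ k : Fin d, δ⁻¹ * (2 * (K * σ * (K * σ) + 1 * (K * σ ^ 2))) :=
      (abs_add_le _ _).trans (add_le_add ht <| (Finset.abs_sum_le_sum_abs _ _).trans <|
        Finset.sum_le_sum fun j _ => (Finset.abs_sum_le_sum_abs _ _).trans <|
          Finset.sum_le_sum fun k _ => hxx j k)
    _ = _ := by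
      simp only [Finset.sum_const, Finset.card_univ, Fintype.card_fin, nsmul_eq_mul,
        potentialBound]
      ring

lemma abs_cutoffDrift_le (j : Fin d) :
    |cutoffDrift a z η j p| ≤ driftBound d δ K * (R - r)⁻¹ := by
  have hδ : 0 < δ⁻¹ := inv_pos.2 ha.pos
  calc _ ≤ ∑ k, |a (p.2 z) j k * (4 * pdx k η p)| := Finset.abs_sum_le_sum_abs _ _
    _ ≤ ∑ k : Fin d, δ⁻¹ * (4 * (K * (R - r)⁻¹)) := Finset.sum_le_sum fun k _ => by
      rw [abs_mul, abs_mul, abs_of_pos (four_pos (α := ℝ))]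
      gcongr
      exacts [ha.abs_coeff_le _ j k, hη.abs_pdx_le k p hp]
    _ = _ := by
      simp only [Finset.sum_const, Finset.card_univ, Fintype.card_fin, nsmul_eq_mul, driftBound]
      ring

end Bounds

end Localization

section LocalEstimate

variable {d : ℕ} {z : Fin d} {δ K r R : ℝ} {a : ℝ → Fin d → Fin d → ℝ}
  {η u : ℝ × (Fin d → ℝ) → ℝ}

lemma add_add_sq_le (x y w : ℝ) : (x + y + w) ^ 2 ≤ 3 * (x ^ 2 + y ^ 2 + w ^ 2) := by
  nlinarith [sq_nonneg (x - y), sq_nonneg (x - w), sq_nonneg (y - w)]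

lemma setIntegral_halfSpace_eq_of_forall_eq_zero {f : ℝ × (Fin d → ℝ) → ℝ}
    (hf : ∀ p ∈ halfSpace d \ Qc d R, f p = 0) :
    ∫ p in halfSpace d, f p = ∫ p in Qc d R, f p :=
  setIntegral_eq_of_subset_of_forall_sdiff_eq_zero measurableSet_halfSpace
    (Qc_subset_halfSpace d R) hf

lemma setIntegral_halfSpace_cutoff_mul_sq (hη : IsCutoff K r R η) (f : ℝ × (Fin d → ℝ) → ℝ) :
    ∫ p in halfSpace d, (η p * f p) ^ 2 = ∫ p in Qc d R, (η p * f p) ^ 2 :=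
  setIntegral_halfSpace_eq_of_forall_eq_zero fun p hp => by simp [hη.eq_zero p hp]

lemma parabolicOp_sq_mul_sub_eq_zero (ha : ∀ s j k, a s j k = a s k j) (hη : IsCutoff K r R η)
    (hu : ContDiff ℝ ∞ u) {p : ℝ × (Fin d → ℝ)} (hp : p ∈ halfSpace d \ Qc d R) :
    parabolicOp a z (fun q => η q ^ 2 * u q) p - η p ^ 2 * u p = 0 := by
  have hη₀ : η p = 0 := hη.eq_zero p hp
  have hη_x (j : Fin d) : pdx j η p = 0 := dirDeriv_eq_zero_of_nonneg hη.nonneg hη₀ _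
  rw [parabolicOp_sq_mul_sub hη.contDiff hu p ha]
  simp [cutoffPotential, hη₀, hη_x]

section Operator

variable (ha : IsUniformlyElliptic δ a) (hη : IsCutoff K r R η)
include ha hη

lemma parabolicOp_sq_mul_sub_sq_le (hu : ContDiff ℝ ∞ u) {p : ℝ × (Fin d → ℝ)}
    (hp : p ∈ Qc d R) :
    (parabolicOp a z (fun q => η q ^ 2 * u q) p - η p ^ 2 * u p) ^ 2
      ≤ 3 * ((parabolicOp a z u p - u p) ^ 2
        + (potentialBound d δ K * (R - r)⁻¹ ^ 2) ^ 2 * u p ^ 2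
        + d * (driftBound d δ K * (R - r)⁻¹) ^ 2 * ∑ j, (η p * pdx j u p) ^ 2) := by
  have hmain : (η p ^ 2 * (parabolicOp a z u p - u p)) ^ 2 ≤ (parabolicOp a z u p - u p) ^ 2 := by
    rw [mul_pow]
    exact mul_le_of_le_one_left (sq_nonneg _)
      (pow_le_one₀ (sq_nonneg _) (pow_le_one₀ (hη.nonneg p) (hη.le_one p)))
  have hpotential : (cutoffPotential a z η p * u p) ^ 2
      ≤ (potentialBound d δ K * (R - r)⁻¹ ^ 2) ^ 2 * u p ^ 2 := by
    rw [mul_pow, ← sq_abs (cutoffPotential a z η p)]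
    gcongr
    exact abs_cutoffPotential_le ha hη hp
  have hdrift (j : Fin d) : (cutoffDrift a z η j p * (η p * pdx j u p)) ^ 2
      ≤ (driftBound d δ K * (R - r)⁻¹) ^ 2 * (η p * pdx j u p) ^ 2 := by
    rw [mul_pow, ← sq_abs (cutoffDrift a z η j p)]
    gcongr
    exact abs_cutoffDrift_le ha hη hp j
  have hsum : (∑ j, cutoffDrift a z η j p * (η p * pdx j u p)) ^ 2
      ≤ d * (driftBound d δ K * (R - r)⁻¹) ^ 2 * ∑ j, (η p * pdx j u p) ^ 2 := by
    have hcauchy := sq_sum_le_card_mul_sum_sq (s := Finset.univ)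
      (f := fun j => cutoffDrift a z η j p * (η p * pdx j u p))
    rw [Finset.card_univ, Fintype.card_fin] at hcauchy
    rw [mul_assoc, Finset.mul_sum]
    exact hcauchy.trans (by gcongr with j; exact hdrift j)
  rw [parabolicOp_sq_mul_sub hη.contDiff hu p ha.symm]
  exact (add_add_sq_le _ _ _).trans (by gcongr)

lemma integral_parabolicOp_sq_mul_sub_sq_le (hu : IsTestFunction u) :
    ∫ p in halfSpace d, (parabolicOp a z (fun q => η q ^ 2 * u q) p - η p ^ 2 * u p) ^ 2
      ≤ 3 * ((∫ p in Qc d R, (parabolicOp a z u p - u p) ^ 2)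
        + (potentialBound d δ K * (R - r)⁻¹ ^ 2) ^ 2 * (∫ p in Qc d R, u p ^ 2)
        + d * (driftBound d δ K * (R - r)⁻¹) ^ 2
          * ∑ j, ∫ p in halfSpace d, (η p * pdx j u p) ^ 2) := by
  have hLu := (memLp_parabolicOp_sub (z := z) ha hu (volume.restrict (Qc d R))).integrable_sq
  have hu₂ := (hu.memLp (μ := volume.restrict (Qc d R)) 2).integrable_sq
  have hx (j : Fin d) := (((hu.pdx j).smooth_mul hη.contDiff).memLp
    (μ := volume.restrict (Qc d R)) 2).integrable_sq
  have hv : IsTestFunction fun q => η q ^ 2 * u q := hu.smooth_mul (hη.contDiff.pow 2)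
  rw [setIntegral_halfSpace_eq_of_forall_eq_zero fun p hp => by
      rw [parabolicOp_sq_mul_sub_eq_zero ha.symm hη hu.contDiff hp, zero_pow two_ne_zero]]
  simp_rw [setIntegral_halfSpace_cutoff_mul_sq hη]
  rw [← integral_finsetSum _ fun j _ => hx j, ← integral_const_mul, ← integral_const_mul,
    ← integral_add hLu (hu₂.const_mul _), ← integral_add (hLu.fun_add (hu₂.const_mul _))
      ((integrable_finsetSum _ fun j _ => hx j).const_mul _), ← integral_const_mul]
  refine setIntegral_mono_on (memLp_parabolicOp_sub ha hv _).integrable_sq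
    (((hLu.fun_add (hu₂.const_mul _)).fun_add
      ((integrable_finsetSum _ fun j _ => hx j).const_mul _)).const_mul _) (measurableSet_Qc d R)
    fun p hp => parabolicOp_sq_mul_sub_sq_le ha hη hu.contDiff hp

end Operator

section Interpolation

lemma neg_mul_le_of_abs_le {σ ε b c V y u : ℝ} (hε : 0 < ε) (hb : |b| ≤ K * σ)
    (hc : |c| ≤ K * σ ^ 2) :
    -(σ ^ 2 * u * (V - 2 * (b * y) - 2 * (b ^ 2 + c) * u))
      ≤ ε / 2 * V ^ 2 + σ ^ 2 / 2 * y ^ 2 + (1 / (2 * ε) + 4 * K ^ 2 + 2 * K) * σ ^ 4 * u ^ 2 := by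
  have hb₂ : b ^ 2 ≤ K ^ 2 * σ ^ 2 := by
    rw [← mul_pow]
    exact sq_le_sq.2 (hb.trans (le_abs_self _))
  have hV : -(σ ^ 2 * u * V) ≤ ε / 2 * V ^ 2 + 1 / (2 * ε) * (σ ^ 2 * u) ^ 2 := by
    have hsq : 0 ≤ 1 / (2 * ε) * (ε * V + σ ^ 2 * u) ^ 2 := by positivity
    have hexpand : 1 / (2 * ε) * (ε * V + σ ^ 2 * u) ^ 2
        = ε / 2 * V ^ 2 + 1 / (2 * ε) * (σ ^ 2 * u) ^ 2 + σ ^ 2 * u * V := by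
      field_simp
      ring
    linarith
  have hy : 2 * (u * b) * y ≤ 1 / 2 * y ^ 2 + 2 * (b ^ 2 * u ^ 2) := by
    nlinarith [sq_nonneg (y - 2 * (u * b))]
  calc _ = -(σ ^ 2 * u * V) + σ ^ 2 * (2 * (u * b) * y) + 2 * σ ^ 2 * (b ^ 2 + c) * u ^ 2 := by ring
    _ ≤ (ε / 2 * V ^ 2 + 1 / (2 * ε) * (σ ^ 2 * u) ^ 2)
        + σ ^ 2 * (1 / 2 * y ^ 2 + 2 * (K ^ 2 * σ ^ 2 * u ^ 2))
        + 2 * σ ^ 2 * (K ^ 2 * σ ^ 2 + K * σ ^ 2) * u ^ 2 := by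
      gcongr
      · exact hy.trans (by gcongr)
      · exact (le_abs_self c).trans hc
    _ = _ := by ring

variable (hη : IsCutoff K r R η) (hu : IsTestFunction u)
include hη hu

lemma integral_mul_pdx_sq_eq (j : Fin d) :
    ∫ p in halfSpace d, (η p * pdx j u p) ^ 2
      = ∫ p in Qc d R, -(u p * pdx j (fun q => η q ^ 2 * pdx j u q) p) := by
  have hflux : ContDiff ℝ ∞ fun q => η q ^ 2 * pdx j u q :=
    (hη.contDiff.pow 2).mul (hu.pdx j).contDiff
  have hparts := setIntegral_halfSpace_mul_pdx_mul (c := fun _ => 1) (memLp_top_const 1)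
    (j := j) (fun _ _ => rfl) hu hflux
  have hvanish : ∀ p ∈ halfSpace d \ Qc d R,
      -(u p * pdx j (fun q => η q ^ 2 * pdx j u q) p) = 0 := fun p hp => by
    simp [pdx_sq_mul hη.contDiff (hu.pdx j).contDiff, hη.eq_zero p hp]
  rw [← setIntegral_halfSpace_eq_of_forall_eq_zero hvanish, integral_neg]
  simp only [one_mul] at hparts
  rw [← hparts]
  congr 1 with p
  ring

lemma neg_mul_pdx_sq_mul_pdx_le {ε : ℝ} (hε : 0 < ε) {p : ℝ × (Fin d → ℝ)} (hp : p ∈ Qc d R)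
    (j : Fin d) :
    (R - r)⁻¹ ^ 2 * -(u p * pdx j (fun q => η q ^ 2 * pdx j u q) p)
      ≤ ε / 2 * pdxx j j (fun q => η q ^ 2 * u q) p ^ 2
        + (R - r)⁻¹ ^ 2 / 2 * (η p * pdx j u p) ^ 2
        + (1 / (2 * ε) + 4 * K ^ 2 + 2 * K) * (R - r)⁻¹ ^ 4 * u p ^ 2 := by
  have hη_xx : |η p * pdxx j j η p| ≤ K * (R - r)⁻¹ ^ 2 := by
    rw [abs_mul]
    exact (mul_le_of_le_one_left (abs_nonneg _) (hη.abs_le_one p)).trans (hη.abs_pdxx_le j j p hp)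
  refine le_of_eq_of_le ?_ (neg_mul_le_of_abs_le hε (hη.abs_pdx_le j p hp) hη_xx)
  rw [pdx_sq_mul hη.contDiff (hu.pdx j).contDiff, pdxx_sq_mul hη.contDiff hu.contDiff, pdxx]
  ring

lemma sq_mul_integral_mul_pdx_sq_le {ε : ℝ} (hε : 0 < ε) (j : Fin d) :
    (R - r)⁻¹ ^ 2 * ∫ p in halfSpace d, (η p * pdx j u p) ^ 2
      ≤ ε * (∫ p in halfSpace d, pdxx j j (fun q => η q ^ 2 * u q) p ^ 2)
        + (1 / ε + 8 * K ^ 2 + 4 * K) * ((R - r)⁻¹ ^ 4 * ∫ p in Qc d R, u p ^ 2) := by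
  set σ := (R - r)⁻¹
  have hv : IsTestFunction fun q => η q ^ 2 * u q := hu.smooth_mul (hη.contDiff.pow 2)
  have hflux : IsTestFunction fun q => η q ^ 2 * pdx j u q :=
    (hu.pdx j).smooth_mul (hη.contDiff.pow 2)
  have hV := ((hv.pdxx j j).memLp (μ := volume.restrict (Qc d R)) 2).integrable_sq
  have hY := (((hu.pdx j).smooth_mul hη.contDiff).memLp
    (μ := volume.restrict (Qc d R)) 2).integrable_sq
  have hU := (hu.memLp (μ := volume.restrict (Qc d R)) 2).integrable_sq
  have hF : Integrable (fun p => -(u p * pdx j (fun q => η q ^ 2 * pdx j u q) p))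
      (volume.restrict (Qc d R)) := ((hu.memLp 2).integrable_mul ((hflux.pdx j).memLp 2)).neg
  have hint := setIntegral_mono_on (hF.const_mul (σ ^ 2))
    (((hV.const_mul (ε / 2)).fun_add (hY.const_mul (σ ^ 2 / 2))).fun_add
      (hU.const_mul ((1 / (2 * ε) + 4 * K ^ 2 + 2 * K) * σ ^ 4)))
    (measurableSet_Qc d R) fun p hp => neg_mul_pdx_sq_mul_pdx_le hη hu hε hp j
  have hV_le : ∫ p in Qc d R, pdxx j j (fun q => η q ^ 2 * u q) p ^ 2
      ≤ ∫ p in halfSpace d, pdxx j j (fun q => η q ^ 2 * u q) p ^ 2 :=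
    setIntegral_mono_set ((hv.pdxx j j).memLp 2).integrable_sq (.of_forall fun p => sq_nonneg _)
      (Qc_subset_halfSpace d R).eventuallyLE
  rw [integral_const_mul, integral_add ((hV.const_mul _).fun_add (hY.const_mul _)) (hU.const_mul _),
    integral_add (hV.const_mul _) (hY.const_mul _), integral_const_mul, integral_const_mul,
    integral_const_mul, ← setIntegral_halfSpace_cutoff_mul_sq hη,
    ← integral_mul_pdx_sq_eq hη hu j] at hint
  have hε_half : 1 / (2 * ε) = 1 / ε / 2 := by field_simp
  rw [hε_half] at hint
  linarith [mul_le_mul_of_nonneg_left hV_le hε.le]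

end Interpolation

lemma le_of_le_add_sum_of_forall_interpolation {ι : Type*} [Fintype ι]
    {C m n q ε T A B s : ℝ} {Y V : ι → ℝ} (hC : 0 ≤ C) (hm : 0 ≤ m) (hn : 0 ≤ n) (hq : 0 ≤ q)
    (hε : 0 ≤ ε) (hA : 0 ≤ A) (hB : 0 ≤ B) (hT : T ≤ C * (A + m * B + n * (s * ∑ j, Y j)))
    (hY : ∀ j, s * Y j ≤ ε * V j + q * B) (hVT : ∑ j, V j ≤ T) (hT₀ : 0 ≤ T)
    (hCnε : C * n * ε ≤ 1 / 2) :
    T ≤ 2 * C * (1 + m + n * (Fintype.card ι * q)) * (A + B) := by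
  have hY_sum : s * ∑ j, Y j ≤ ε * T + Fintype.card ι * q * B := calc
    s * ∑ j, Y j ≤ ∑ j, (ε * V j + q * B) := by
      rw [Finset.mul_sum]
      exact Finset.sum_le_sum fun j _ => hY j
    _ = ε * ∑ j, V j + Fintype.card ι * q * B := by
      simp [Finset.sum_add_distrib, Finset.mul_sum, mul_assoc]
    _ ≤ _ := by gcongr
  have habsorb : T ≤ C * (A + m * B + n * (Fintype.card ι * q * B)) + 1 / 2 * T := calc
    T ≤ C * (A + m * B + n * (ε * T + Fintype.card ι * q * B)) := hT.trans (by gcongr)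
    _ = C * (A + m * B + n * (Fintype.card ι * q * B)) + C * n * ε * T := by ring
    _ ≤ _ := by gcongr
  have hslack : 0 ≤ C * ((m + n * (Fintype.card ι * q)) * A + B) := by positivity
  linarith

lemma sobolevDensity_nonneg (v : ℝ × (Fin d → ℝ) → ℝ) (p : ℝ × (Fin d → ℝ)) :
    0 ≤ sobolevDensity v p := by
  unfold sobolevDensity
  positivity

lemma sum_integral_pdxx_self_sq_le {v : ℝ × (Fin d → ℝ) → ℝ} (hv : IsTestFunction v) :
    ∑ j, ∫ p in halfSpace d, pdxx j j v p ^ 2 ≤ ∫ p in halfSpace d, sobolevDensity v p := by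
  rw [integral_sobolevDensity hv]
  refine le_add_of_nonneg_of_le (by positivity) (Finset.sum_le_sum fun j _ => ?_)
  exact Finset.single_le_sum (f := fun k => ∫ p in halfSpace d, pdxx j k v p ^ 2)
    (fun k _ => by positivity) (Finset.mem_univ j)

lemma sobolevDensity_congr {v : ℝ × (Fin d → ℝ) → ℝ} {p : ℝ × (Fin d → ℝ)} (h : u =ᶠ[𝓝 p] v) :
    sobolevDensity u p = sobolevDensity v p := by
  have ht : pdt u p = pdt v p := (dirDeriv_eventuallyEq h _).eq_of_nhds
  have hx (j : Fin d) : pdx j u =ᶠ[𝓝 p] pdx j v := dirDeriv_eventuallyEq h _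
  have hxx (j k : Fin d) : pdxx j k u p = pdxx j k v p :=
    (dirDeriv_eventuallyEq (hx k) _).eq_of_nhds
  simp only [sobolevDensity, h.eq_of_nhds, ht, fun j => (hx j).eq_of_nhds, hxx]

lemma parabolicOp_congr {v : ℝ × (Fin d → ℝ) → ℝ} {p : ℝ × (Fin d → ℝ)} (h : u =ᶠ[𝓝 p] v) :
    parabolicOp a z u p = parabolicOp a z v p := by
  have ht : pdt u p = pdt v p := (dirDeriv_eventuallyEq h _).eq_of_nhds
  have hxx (j k : Fin d) : pdxx j k u p = pdxx j k v p :=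
    (dirDeriv_eventuallyEq (dirDeriv_eventuallyEq h _) _).eq_of_nhds
  simp only [parabolicOp, ht, hxx]

lemma setIntegral_sobolevDensity_le_cutoff (hη : IsCutoff K r R η) (hu : IsTestFunction u) :
    ∫ p in Qc d r, sobolevDensity u p
      ≤ ∫ p in halfSpace d, sobolevDensity (fun q => η q ^ 2 * u q) p := by
  have heq : ∀ p ∈ Qc d r, sobolevDensity u p = sobolevDensity (fun q => η q ^ 2 * u q) p := by
    refine fun p hp => sobolevDensity_congr ?_
    filter_upwards [(isOpen_Qc d r).mem_nhds hp] with q hq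
    rw [hη.eq_one q hq, one_pow, one_mul]
  rw [setIntegral_congr_fun (measurableSet_Qc d r) heq]
  exact setIntegral_mono_set (integrable_sobolevDensity (hu.smooth_mul (hη.contDiff.pow 2)))
    (.of_forall (sobolevDensity_nonneg _)) (Qc_subset_halfSpace d r).eventuallyLE

theorem exists_setIntegral_sobolevDensity_le (d : ℕ) {δ : ℝ} (hδ : 0 < δ) :
    ∃ C : ℝ, 0 < C ∧ ∀ (z : Fin d) (a : ℝ → Fin d → Fin d → ℝ), IsUniformlyElliptic δ a →
      ∀ r R : ℝ, 0 ≤ r → r < R → ∀ u, IsTestFunction u →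
        ∫ p in Qc d r, sobolevDensity u p
          ≤ C * ((∫ p in Qc d R, (parabolicOp a z u p - u p) ^ 2)
            + (R - r)⁻¹ ^ 4 * ∫ p in Qc d R, u p ^ 2) := by
  obtain ⟨C, hC, hglobal⟩ := exists_integral_sobolevDensity_le d hδ
  obtain ⟨K, hK, hcutoff⟩ := exists_isCutoff
  set m := potentialBound d δ K ^ 2
  set n := d * driftBound d δ K ^ 2
  set ε := 1 / (2 * (3 * C * n) + 1) with hε_def
  have hn : 0 ≤ n := by positivity
  have hε : 0 < ε := by positivity
  have hCnε : 3 * C * n * ε ≤ 1 / 2 := by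
    rw [hε_def, mul_one_div, div_le_div_iff₀ (by positivity) two_pos]
    linarith
  refine ⟨2 * (3 * C) * (1 + m + n * (Fintype.card (Fin d) * (1 / ε + 8 * K ^ 2 + 4 * K))),
    by positivity, fun z a ha r R hr hrR u hu => ?_⟩
  have hη := hcutoff d r R hr hrR
  have hv := hu.smooth_mul (hη.contDiff.pow 2)
  refine (setIntegral_sobolevDensity_le_cutoff hη hu).trans
    (le_of_le_add_sum_of_forall_interpolation (by positivity) (sq_nonneg _) hn (by positivity)
      hε.le (by positivity) (by positivity) ?_ (sq_mul_integral_mul_pdx_sq_le hη hu hε)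
      (sum_integral_pdxx_self_sq_le hv) (integral_nonneg (sobolevDensity_nonneg _)) hCnε)
  calc _ ≤ _ := hglobal z a ha _ hv
    _ ≤ _ := mul_le_mul_of_nonneg_left (integral_parabolicOp_sq_mul_sub_sq_le ha hη hu) hC.le
    _ = _ := by ring

end LocalEstimate

theorem exists_setIntegral_sobolevDensity_le_of_contDiffOn (d : ℕ) {δ : ℝ} (hδ : 0 < δ) :
    ∃ C : ℝ, 0 < C ∧ ∀ (z : Fin d) (a : ℝ → Fin d → Fin d → ℝ), IsUniformlyElliptic δ a →
      ∀ r R : ℝ, 0 ≤ r → r < R → ∀ (u : ℝ × (Fin d → ℝ) → ℝ) (U : Set (ℝ × (Fin d → ℝ))),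
        IsOpen U → closure (Qc d R) ⊆ U → ContDiffOn ℝ ∞ u U →
          ∫ p in Qc d r, sobolevDensity u p
            ≤ C * ((∫ p in Qc d R, (parabolicOp a z u p - u p) ^ 2)
              + (R - r)⁻¹ ^ 4 * ∫ p in Qc d R, u p ^ 2) := by
  obtain ⟨C, hC, hest⟩ := exists_setIntegral_sobolevDensity_le d hδ
  refine ⟨C, hC, fun z a ha r R hr hrR u U hU hQU hu => ?_⟩
  obtain ⟨v, hv, huv_closure⟩ :=
    exists_isTestFunction_eventuallyEq hU (isCompact_closure_Qc d R) hQU hu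
  have huv : ∀ p ∈ Qc d R, u =ᶠ[𝓝 p] v := fun p hp => huv_closure p (subset_closure hp)
  have hdensity : ∀ p ∈ Qc d r, sobolevDensity u p = sobolevDensity v p :=
    fun p hp => sobolevDensity_congr (huv p (Qc_mono d hr hrR.le hp))
  have hop : ∀ p ∈ Qc d R, (parabolicOp a z u p - u p) ^ 2 = (parabolicOp a z v p - v p) ^ 2 :=
    fun p hp => by rw [parabolicOp_congr (huv p hp), (huv p hp).eq_of_nhds]
  have hsq : ∀ p ∈ Qc d R, u p ^ 2 = v p ^ 2 := fun p hp => by rw [(huv p hp).eq_of_nhds]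
  rw [setIntegral_congr_fun (measurableSet_Qc d r) hdensity,
    setIntegral_congr_fun (measurableSet_Qc d R) hop,
    setIntegral_congr_fun (measurableSet_Qc d R) hsq]
  exact hest z a ha r R hr hrR v hv

lemma sqrt_le_sqrt_mul_sqrt_add {X C A τ B : ℝ} (hC : 0 ≤ C) (hA : 0 ≤ A) (hτ : 0 ≤ τ)
    (hB : 0 ≤ B) (h : X ≤ C * (A + τ ^ 2 * B)) : √X ≤ √C * (√A + τ * √B) := by
  have hsum : A + τ ^ 2 * B ≤ (√A + τ * √B) ^ 2 := calc
    A + τ ^ 2 * B = √A ^ 2 + (τ * √B) ^ 2 := by rw [mul_pow, Real.sq_sqrt hA, Real.sq_sqrt hB]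
    _ ≤ _ := pow_add_pow_le (Real.sqrt_nonneg _) (by positivity) two_ne_zero
  calc √X ≤ √(C * (√A + τ * √B) ^ 2) := Real.sqrt_le_sqrt (h.trans (by gcongr))
    _ = √C * (√A + τ * √B) := by rw [Real.sqrt_mul hC, Real.sqrt_sq (by positivity)]

theorem stmt7 (d : ℕ) (hd : 0 < d) (δ : ℝ) (hδ : δ ∈ Set.Ioo (0 : ℝ) 1) :
    ∃ N : ℝ, 0 < N ∧
      ∀ a : ℝ → Fin d → Fin d → ℝ,
        (∀ j k, Measurable fun s => a s j k) →
        (∀ s j k, a s j k = a s k j) →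
        (∀ (s : ℝ) (θ : Fin d → ℝ),
          δ * ∑ j, (θ j) ^ 2 ≤ ∑ j, ∑ k, a s j k * θ j * θ k ∧
          ∑ j, ∑ k, a s j k * θ j * θ k ≤ δ⁻¹ * ∑ j, (θ j) ^ 2) →
        ∀ r R : ℝ, 0 < r → r < R →
          ∀ (u : ℝ × (Fin d → ℝ) → ℝ) (U : Set (ℝ × (Fin d → ℝ))),
            IsOpen U → closure (Qc d R) ⊆ U → ContDiffOn ℝ (⊤ : ℕ∞) u U →
            Real.sqrt (∫ p in Qc d r,
                ((u p) ^ 2 + (pdt u p) ^ 2 + (∑ j, (pdx j u p) ^ 2)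
                  + ∑ j, ∑ k, (pdxx j k u p) ^ 2))
              ≤ N * (Real.sqrt (∫ p in Qc d R,
                    ((pdt u p + ∑ j, ∑ k, a (p.2 ⟨0, hd⟩) j k * pdxx j k u p)
                      - u p) ^ 2)
                  + ((R - r) ^ 2)⁻¹ * Real.sqrt (∫ p in Qc d R, (u p) ^ 2)) := by
  obtain ⟨C, hC, hest⟩ := exists_setIntegral_sobolevDensity_le_of_contDiffOn d hδ.1
  refine ⟨√C, Real.sqrt_pos.2 hC,
    fun a ha_meas ha_symm ha_ell r R hr hrR u U hU hQU hu => ?_⟩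
  have ha : IsUniformlyElliptic δ a :=
    ⟨hδ.1, ha_meas, ha_symm, fun s θ => (ha_ell s θ).1, fun s θ => (ha_ell s θ).2⟩
  have hle := hest ⟨0, hd⟩ a ha r R hr.le hrR u U hU hQU hu
  rw [show (R - r)⁻¹ ^ 4 = ((R - r) ^ 2)⁻¹ ^ 2 by rw [← inv_pow, ← pow_mul]] at hle
  exact sqrt_le_sqrt_mul_sqrt_add hC.le (by positivity) (by positivity) (by positivity) hle
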